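/- A discrete group G is C*-simple if and only if every G-boundary contained in the dual space C*_λ(G)* is a singleton {φ} with φ a scalar multiple of the canonical tracial state τ_λ. -/

import Mathlib

noncomputable section
open scoped ENNReal ComplexOrder lp
open MeasureTheory
set_option maxHeartbeats 1000000
set_option synthInstance.maxHeartbeats 1000000

universe u

variable {G : Type u} [Group G]

theorem translat_mem (g : G) (f : ℓ²(G, ℂ)) : Memℓp (fun h => f (g⁻¹ * h)) 2 := by
  have hf : Summable fun i : G => ‖f i‖ ^ (2 : ℝ≥0∞).toReal :=
    (memℓp_gen_iff (by norm_num)).1 (lp.memℓp f)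
  exact memℓp_gen ((Equiv.mulLeft g⁻¹).summable_iff.2 hf)

/-- The left regular representation of `g ∈ G` as a linear isometric bijection of `ℓ²(G)`,
given by `(λ_g ξ)(h) = ξ(g⁻¹ h)`. -/
def lregE (g : G) : ℓ²(G, ℂ) ≃ₗᵢ[ℂ] ℓ²(G, ℂ) :=
{ toFun := fun f => ⟨fun h => f (g⁻¹ * h), translat_mem g f⟩
  invFun := fun f => ⟨fun h => f (g * h), by
    have := translat_mem g⁻¹ f; simp only [inv_inv] at this; exact this⟩
  map_add' := by intro f₁ f₂; ext h; simp [lp.coeFn_add]; rfl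
  map_smul' := by intro c f; ext h; simp [lp.coeFn_smul]
  left_inv := by intro f; ext h; simp
  right_inv := by intro f; ext h; simp
  norm_map' := by
    intro f
    rw [lp.norm_eq_tsum_rpow (by norm_num) f, lp.norm_eq_tsum_rpow (by norm_num)]
    congr 1
    exact (Equiv.mulLeft g⁻¹).tsum_eq (fun h => ‖f h‖ ^ (2 : ℝ≥0∞).toReal) }

/-- The left regular representation `λ` as bounded operators on `ℓ²(G)`. -/
def lreg (g : G) : ℓ²(G, ℂ) →L[ℂ] ℓ²(G, ℂ) :=
  (lregE g).toContinuousLinearEquiv.toContinuousLinearMap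

variable (G) in
/-- The reduced group C*-algebra `C*_λ(G)`: the norm-closed star subalgebra of the algebra of
bounded operators on `ℓ²(G)` generated by the image of the left regular representation. -/
def redCstar : StarSubalgebra ℂ (ℓ²(G, ℂ) →L[ℂ] ℓ²(G, ℂ)) :=
  (StarAlgebra.adjoin ℂ (Set.range (lreg (G := G)))).topologicalClosure

/-- `λ_g` as an element of the reduced group C*-algebra. -/
def uu (g : G) : redCstar G :=
  ⟨lreg g, StarSubalgebra.le_topologicalClosure _ (StarAlgebra.subset_adjoin ℂ _ ⟨g, rfl⟩)⟩

variable (G) in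
/-- `G` is C*-simple: `C*_λ(G)` has no closed two-sided ideals other than `{0}` and the
whole algebra. -/
def IsCstarSimple : Prop :=
  ∀ I : TwoSidedIdeal (redCstar G), IsClosed (I : Set (redCstar G)) → I = ⊥ ∨ I = ⊤

/-- The vector `δ_e ∈ ℓ²(G)`. -/
def deltaOne : ℓ²(G, ℂ) := letI := Classical.decEq G; lp.single 2 (1 : G) 1

variable (G) in
/-- The canonical tracial state `τ_λ(a) = ⟨a δ_e, δ_e⟩` on the reduced C*-algebra, as a
weak* continuous linear functional. -/
def tau : WeakDual ℂ (redCstar G) :=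
  (innerSL ℂ (deltaOne (G := G))).comp
    ((ContinuousLinearMap.apply ℂ ℓ²(G, ℂ) (deltaOne (G := G))).comp
      { toLinearMap := (redCstar G).subtype.toLinearMap, cont := continuous_subtype_val })

attribute [irreducible] redCstar lreg lregE deltaOne uu tau

/-- The action of `G` on the dual of `C*_λ(G)`: `(g·φ)(a) = φ(λ_g⁻¹ a λ_g)`. -/
def dualAct (g : G) (φ : WeakDual ℂ (redCstar G)) : WeakDual ℂ (redCstar G) :=
{ toFun := fun a => φ (uu g⁻¹ * a * uu g)
  map_add' := by
    intro a b
    show φ (uu g⁻¹ * (a + b) * uu g) = φ (uu g⁻¹ * a * uu g) + φ (uu g⁻¹ * b * uu g)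
    rw [mul_add, add_mul, map_add]
  map_smul' := by
    intro c a
    show φ (uu g⁻¹ * (c • a) * uu g) = c • φ (uu g⁻¹ * a * uu g)
    rw [mul_smul_comm, smul_mul_assoc, _root_.map_smul]
  cont := (map_continuous φ).comp
      ((continuous_const.mul continuous_id).mul continuous_const) }

theorem dualAct_continuous (g : G) : Continuous (dualAct (G := G) g) := by
  apply WeakDual.continuous_of_continuous_eval
  intro a
  exact WeakDual.eval_continuous (uu g⁻¹ * a * uu g)

variable (G) in
/-- A `G`-boundary in the dual space of `C*_λ(G)`: a weak* compact `G`-invariant set of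
functionals such that every point mass lies in the weak* closure of the `G`-orbit of every
regular Borel probability measure on it. -/
def IsDualBoundary (B : Set (WeakDual ℂ (redCstar G))) : Prop :=
  B.Nonempty ∧ IsCompact B ∧
  ∃ hinv : ∀ (g : G) (φ : WeakDual ℂ (redCstar G)), φ ∈ B → dualAct g φ ∈ B,
  letI : MeasurableSpace B := borel B
  haveI : BorelSpace B := ⟨rfl⟩
  ∀ (μ : ProbabilityMeasure B) (x : B),
    (⟨Measure.dirac x, Measure.dirac.isProbabilityMeasure⟩ : ProbabilityMeasure B) ∈
      closure {ν : ProbabilityMeasure B | ∃ g : G,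
        ν = μ.map (f := fun y => (⟨dualAct g y.1, hinv g y.1 y.2⟩ : B))
          ((((dualAct_continuous g).comp continuous_subtype_val).subtype_mk
            (fun y => hinv g y.1 y.2)).measurable.aemeasurable)}

/-!
If every boundary in the dual is trivial, let `I` be a proper closed ideal. The norm-one functionals
`φ` with `φ 1 = 1` that vanish on `I` form a nonempty weak* compact convex invariant set; a minimal
compact convex invariant subset of it contains a boundary, the closure of its extreme points. This
boundary is some `{c • τ}`, so `τ` vanishes on `I`, and `τ (λ_h a λ_k) = 0` for all `h`, `k` forces
`a = 0`.

If `G` is C⋆-simple, take a minimal compact convex invariant set of means on `G`. The boundary `X`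
that it contains has amenable point stabilisers `H`, so that the indicator function of `H` extends
to a positive functional `φ` on the reduced C⋆-algebra. By simplicity an element that is positive in
the GNS representation of `φ` is positive, and has nonnegative trace; this excludes nontrivial
elements acting trivially on an open set. Averaging over the topologically free boundary `X`, in the
manner of Powers, shows that every compact invariant set containing a functional `ψ` contains
`ψ 1 • τ`. This point is fixed by `G`, and a fixed point is the only point of a boundary.
-/

/-! ### States on ordered vector spaces -/

section State

variable {V : Type*} [AddCommGroup V] [Module ℝ V] [PartialOrder V] {e : V} {ν : V → ℝ}

/-- A state of an ordered vector space with order unit `e`: a positive linear functional taking the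
value `1` at `e`. It is a predicate on bare functions so that the states form a subset of the
product space `V → ℝ`, whose topology is the topology of pointwise convergence. -/
structure IsState (e : V) (ν : V → ℝ) : Prop where
  map_add : ∀ f g, ν (f + g) = ν f + ν g
  map_smul : ∀ (c : ℝ) f, ν (c • f) = c * ν f
  nonneg : ∀ f, 0 ≤ f → 0 ≤ ν f
  map_unit : ν e = 1

namespace IsState

theorem map_neg (hν : IsState e ν) (f : V) : ν (-f) = -ν f := by
  simpa using hν.map_smul (-1) f

theorem map_sub (hν : IsState e ν) (f g : V) : ν (f - g) = ν f - ν g := by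
  rw [sub_eq_add_neg, hν.map_add, hν.map_neg, sub_eq_add_neg]

theorem map_sum (hν : IsState e ν) {ι : Type*} (s : Finset ι) (f : ι → V) :
    ν (∑ i ∈ s, f i) = ∑ i ∈ s, ν (f i) :=
  _root_.map_sum (AddMonoidHom.mk' ν hν.map_add) f s

theorem map_smul_unit (hν : IsState e ν) (c : ℝ) : ν (c • e) = c := by
  rw [hν.map_smul, hν.map_unit, mul_one]

theorem mono [IsOrderedAddMonoid V] (hν : IsState e ν) {f g : V} (hfg : f ≤ g) : ν f ≤ ν g := by
  have h := hν.nonneg (g - f) (sub_nonneg.2 hfg)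
  rwa [hν.map_sub, sub_nonneg] at h

theorem le_of_le_smul [IsOrderedAddMonoid V] (hν : IsState e ν) {f : V} {c : ℝ}
    (hf : f ≤ c • e) : ν f ≤ c :=
  (hν.mono hf).trans_eq (hν.map_smul_unit c)

theorem le_of_smul_le [IsOrderedAddMonoid V] (hν : IsState e ν) {f : V} {c : ℝ}
    (hf : c • e ≤ f) : c ≤ ν f :=
  (hν.map_smul_unit c).symm.trans_le (hν.mono hf)

end IsState

theorem isClosed_setOf_isState (e : V) : IsClosed {ν : V → ℝ | IsState e ν} := by
  have hset : {ν : V → ℝ | IsState e ν} =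
      (⋂ f, ⋂ g, {ν | ν (f + g) = ν f + ν g}) ∩ (⋂ c : ℝ, ⋂ f, {ν | ν (c • f) = c * ν f}) ∩
        (⋂ f, ⋂ (_ : 0 ≤ f), {ν | 0 ≤ ν f}) ∩ {ν | ν e = 1} := by
    ext ν
    simp only [Set.mem_inter_iff, Set.mem_iInter, Set.mem_ofPred_eq]
    exact ⟨fun h => ⟨⟨⟨h.map_add, h.map_smul⟩, h.nonneg⟩, h.map_unit⟩,
      fun h => ⟨h.1.1.1, h.1.1.2, h.1.2, h.2⟩⟩
  rw [hset]
  refine (((isClosed_iInter fun f => isClosed_iInter fun g => ?_).inter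
    (isClosed_iInter fun c => isClosed_iInter fun f => ?_)).inter
    (isClosed_iInter fun f => isClosed_iInter fun _ => ?_)).inter ?_
  · exact isClosed_eq (by fun_prop) (by fun_prop)
  · exact isClosed_eq (by fun_prop) (by fun_prop)
  · exact isClosed_le (by fun_prop) (by fun_prop)
  · exact isClosed_eq (by fun_prop) (by fun_prop)

theorem isCompact_setOf_isState [IsOrderedAddMonoid V] {C : V → ℝ} (hl : ∀ f, -C f • e ≤ f)
    (hu : ∀ f, f ≤ C f • e) : IsCompact {ν : V → ℝ | IsState e ν} :=
  (isCompact_univ_pi fun f => isCompact_Icc (a := -C f) (b := C f)).of_isClosed_subset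
    (isClosed_setOf_isState e) fun _ hν f _ =>
      ⟨IsState.le_of_smul_le hν (hl f), IsState.le_of_le_smul hν (hu f)⟩

theorem convex_setOf_isState (e : V) : Convex ℝ {ν : V → ℝ | IsState e ν} := by
  intro ν hν μ hμ a b ha hb hab
  constructor
  · intro f g
    simp only [Pi.add_apply, Pi.smul_apply, smul_eq_mul, hν.map_add, hμ.map_add]
    ring
  · intro c f
    simp only [Pi.add_apply, Pi.smul_apply, smul_eq_mul, hν.map_smul, hμ.map_smul]
    ring
  · intro f hf
    exact add_nonneg (mul_nonneg ha (hν.nonneg f hf)) (mul_nonneg hb (hμ.nonneg f hf))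
  · simpa [hν.map_unit, hμ.map_unit] using hab

end State

section ContinuousFunctions

variable {X : Type*} [TopologicalSpace X] {ν : C(X, ℝ) → ℝ}

theorem IsState.weighted (hν : IsState 1 ν) {k : C(X, ℝ)} (hk : 0 ≤ k) (hνk : 0 < ν k) :
    IsState 1 fun f => (ν k)⁻¹ * ν (k * f) where
  map_add f g := by rw [mul_add, hν.map_add, mul_add]
  map_smul c f := by rw [mul_smul_comm, hν.map_smul, mul_left_comm]
  nonneg f hf := mul_nonneg (inv_nonneg.2 hνk.le) (hν.nonneg _ fun x => mul_nonneg (hk x) (hf x))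
  map_unit := by rw [mul_one, inv_mul_cancel₀ hνk.ne']

variable [CompactSpace X]

theorem neg_norm_smul_one_le (f : C(X, ℝ)) : -‖f‖ • (1 : C(X, ℝ)) ≤ f := fun x => by
  simpa using (abs_le.1 (f.norm_coe_le_norm x)).1

theorem le_norm_smul_one (f : C(X, ℝ)) : f ≤ ‖f‖ • (1 : C(X, ℝ)) := fun x => by
  simpa using (abs_le.1 (f.norm_coe_le_norm x)).2

theorem IsState.abs_le_norm (hν : IsState 1 ν) (f : C(X, ℝ)) : |ν f| ≤ ‖f‖ :=
  abs_le.2 ⟨hν.le_of_smul_le (neg_norm_smul_one_le f), hν.le_of_le_smul (le_norm_smul_one f)⟩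

theorem IsState.continuous (hν : IsState 1 ν) : Continuous ν :=
  (LipschitzWith.of_dist_le_mul (K := 1) fun f g => by
    simpa [Real.dist_eq, ← hν.map_sub, dist_eq_norm] using hν.abs_le_norm (f - g)).continuous

end ContinuousFunctions

/-! ### Barycentres -/

section Barycenter

variable {E : Type*} [AddCommGroup E] [Module ℝ E] [TopologicalSpace E]
  {X : Type*} [TopologicalSpace X]

/-- The point `b` is a barycentre of the functional `ν` on `C(X, ℝ)` with respect to a map `j` from
`X` to a topological vector space: `l b = ν (l ∘ j)` for every continuous linear functional `l`. -/
def IsBarycenter (j : C(X, E)) (ν : C(X, ℝ) → ℝ) (b : E) : Prop :=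
  ∀ l : E →L[ℝ] ℝ, l b = ν ((l : C(E, ℝ)).comp j)

variable {K : Set E} {j : C(X, E)} {ν : C(X, ℝ) → ℝ} {x : X}

theorem IsState.exists_forall_mem_finset_eq (hν : IsState 1 ν)
    (hK : IsCompact K) (hKc : Convex ℝ K) (hjK : ∀ x, j x ∈ K) (S : Finset (E →L[ℝ] ℝ)) :
    ∃ b ∈ K, ∀ l ∈ S, l b = ν ((l : C(E, ℝ)).comp j) := by
  classical
  let P : E →L[ℝ] (S → ℝ) := ContinuousLinearMap.pi fun l => (l : E →L[ℝ] ℝ)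
  let v : S → ℝ := fun l => ν ((l.1 : C(E, ℝ)).comp j)
  suffices hv : v ∈ P '' K by
    obtain ⟨b, hb, hbv⟩ := hv
    exact ⟨b, hb, fun l hl => congrFun hbv ⟨l, hl⟩⟩
  by_contra hv
  obtain ⟨F, u, hFv, hFK⟩ := geometric_hahn_banach_point_closed
    (hKc.linear_image P.toLinearMap) (hK.image P.continuous).isClosed hv
  have hF (w : S → ℝ) : F w = ∑ l, F (Pi.single l 1) * w l := by
    conv_lhs => rw [pi_eq_sum_univ' w]
    simp [mul_comm]
  have hνF : ν (((F.comp P : E →L[ℝ] ℝ) : C(E, ℝ)).comp j) = F v := by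
    have : ((F.comp P : E →L[ℝ] ℝ) : C(E, ℝ)).comp j =
        ∑ l : S, F (Pi.single l 1) • (l.1 : C(E, ℝ)).comp j := by
      ext x
      simpa [P] using hF (P (j x))
    rw [this, hν.map_sum, hF v]
    exact Finset.sum_congr rfl fun l _ => hν.map_smul _ _
  have hu : u ≤ ν (((F.comp P : E →L[ℝ] ℝ) : C(E, ℝ)).comp j) :=
    hν.le_of_smul_le fun x => by simpa using (hFK (P (j x)) ⟨j x, hjK x, rfl⟩).le
  exact (hFv.trans_le (hu.trans_eq hνF)).false

theorem IsState.exists_isBarycenter (hν : IsState 1 ν) (hK : IsCompact K)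
    (hKc : Convex ℝ K) (hjK : ∀ x, j x ∈ K) : ∃ b ∈ K, IsBarycenter j ν b := by
  have h : (K ∩ ⋂ l : E →L[ℝ] ℝ, {b | l b = ν ((l : C(E, ℝ)).comp j)}).Nonempty := by
    refine hK.inter_iInter_nonempty _ (fun l => isClosed_eq l.continuous continuous_const) ?_
    intro S
    obtain ⟨b, hbK, hb⟩ := hν.exists_forall_mem_finset_eq hK hKc hjK S
    exact ⟨b, hbK, Set.mem_iInter₂.2 hb⟩
  obtain ⟨b, hbK, hb⟩ := h
  exact ⟨b, hbK, Set.mem_iInter.1 hb⟩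

variable [IsTopologicalAddGroup E] [ContinuousSMul ℝ E] [LocallyConvexSpace ℝ E] [T2Space E]

theorem eq_of_forall_dual_eq {x y : E} (h : ∀ l : E →L[ℝ] ℝ, l x = l y) : x = y := by
  by_contra hne
  obtain ⟨l, hl⟩ := geometric_hahn_banach_point_point hne
  exact hl.ne (h l)

-- A nonconstant weight `k` would exhibit the barycentre of `ν` as an interior point of the segment
-- between the barycentres of the states weighted by `k` and by `D - k`.
theorem IsState.map_mul_comp_of_le (hν : IsState 1 ν) (hK : IsCompact K) (hKc : Convex ℝ K)
    (hjK : ∀ x, j x ∈ K) (hx : j x ∈ K.extremePoints ℝ) (hνx : IsBarycenter j ν (j x))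
    {k : C(X, ℝ)} {D : ℝ} (hk : 0 ≤ k) (hkD : k ≤ D • 1) (hνk : 0 < ν k) (hνkD : ν k < D)
    (l : E →L[ℝ] ℝ) :
    ν (k * (l : C(E, ℝ)).comp j) = ν k * l (j x) := by
  have hsub : ν (D • 1 - k) = D - ν k := by rw [hν.map_sub, hν.map_smul_unit]
  have hD : 0 < D := hνk.trans hνkD
  obtain ⟨b₁, hb₁K, hb₁⟩ := (hν.weighted hk hνk).exists_isBarycenter hK hKc hjK
  obtain ⟨b₂, hb₂K, hb₂⟩ := (hν.weighted (sub_nonneg.2 hkD)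
    (by rwa [hsub, sub_pos])).exists_isBarycenter hK hKc hjK
  have hseg : j x ∈ openSegment ℝ b₁ b₂ := by
    refine ⟨ν k / D, (D - ν k) / D, div_pos hνk hD, div_pos (sub_pos.2 hνkD) hD,
      by field_simp; ring, eq_of_forall_dual_eq fun m => ?_⟩
    have hne : D - ν k ≠ 0 := (sub_pos.2 hνkD).ne'
    rw [_root_.map_add, _root_.map_smul, _root_.map_smul, hb₁, hb₂, hνx, hsub]
    simp only [sub_mul, smul_one_mul, hν.map_sub, hν.map_smul, smul_eq_mul]
    field_simp
    ring
  rw [← ((mem_extremePoints.1 hx).2 b₁ hb₁K b₂ hb₂K hseg).1, hb₁, mul_inv_cancel_left₀ hνk.ne']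

theorem IsState.map_mul_comp [CompactSpace X] (hν : IsState 1 ν) (hK : IsCompact K)
    (hKc : Convex ℝ K) (hjK : ∀ x, j x ∈ K) (hx : j x ∈ K.extremePoints ℝ)
    (hνx : IsBarycenter j ν (j x)) (h : C(X, ℝ)) (l : E →L[ℝ] ℝ) :
    ν (h * (l : C(E, ℝ)).comp j) = ν h * l (j x) := by
  have hl := neg_le_of_abs_le (hν.abs_le_norm h)
  have hu := le_of_abs_le (hν.abs_le_norm h)
  have hνk : ν (h + (‖h‖ + 1) • 1) = ν h + (‖h‖ + 1) := by rw [hν.map_add, hν.map_smul_unit]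
  have key := hν.map_mul_comp_of_le hK hKc hjK hx hνx (k := h + (‖h‖ + 1) • 1)
    (D := 2 * ‖h‖ + 2) (ContinuousMap.le_def.2 fun z => ?_) (ContinuousMap.le_def.2 fun z => ?_)
    (by linarith) (by linarith) l
  · rw [hνk, add_mul, smul_one_mul, hν.map_add, hν.map_smul, ← hνx l] at key
    linarith
  · have := ContinuousMap.le_def.1 (neg_norm_smul_one_le h) z
    simp only [ContinuousMap.coe_smul, ContinuousMap.coe_one, ContinuousMap.coe_add, Pi.smul_apply,
      Pi.one_apply, Pi.add_apply, ContinuousMap.zero_apply, smul_eq_mul] at this ⊢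
    linarith
  · have := ContinuousMap.le_def.1 (le_norm_smul_one h) z
    simp only [ContinuousMap.coe_smul, ContinuousMap.coe_one, ContinuousMap.coe_add, Pi.smul_apply,
      Pi.one_apply, Pi.add_apply, smul_eq_mul] at this ⊢
    linarith

end Barycenter

section Bauer

variable {X : Type*} [TopologicalSpace X] [CompactSpace X] {ν : C(X, ℝ) → ℝ}

theorem IsState.eq_eval_of_separatesPoints (hν : IsState 1 ν) (x : X) {A : Set C(X, ℝ)}
    (hA : ∀ a b : X, a ≠ b → ∃ f ∈ A, f a ≠ f b) (hmul : ∀ h, ∀ f ∈ A, ν (h * f) = ν h * f x)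
    (f : C(X, ℝ)) : ν f = f x := by
  let B : Subalgebra ℝ C(X, ℝ) :=
    { carrier := {f | ∀ h, ν (h * f) = ν h * f x}
      mul_mem' := fun {a b} ha hb h => by
        rw [← mul_assoc, hb, ha, mul_assoc, ContinuousMap.mul_apply]
      add_mem' := fun {a b} ha hb h => by
        rw [mul_add, hν.map_add, hb, ha, ← mul_add, ContinuousMap.add_apply]
      algebraMap_mem' := fun r h => by
        rw [← Algebra.commutes, ← Algebra.smul_def, hν.map_smul, mul_comm]
        rfl }
  have hclosed : IsClosed (B : Set C(X, ℝ)) := by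
    have : (B : Set C(X, ℝ)) = ⋂ h, {f | ν (h * f) = ν h * f x} := by
      ext f
      simp only [Set.mem_iInter, Set.mem_ofPred_eq]
      rfl
    rw [this]
    exact isClosed_iInter fun h => isClosed_eq (hν.continuous.comp (continuous_const_mul h))
      ((continuous_eval_const x).const_mul _)
  have hsep : B.SeparatesPoints := fun a b hab => by
    obtain ⟨f, hf, hfab⟩ := hA a b hab
    exact ⟨f, ⟨f, fun h => hmul h f hf, rfl⟩, hfab⟩
  have hf : f ∈ (B.topologicalClosure : Set C(X, ℝ)) := by
    rw [ContinuousMap.subalgebra_topologicalClosure_eq_top_of_separatesPoints B hsep]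
    exact Set.mem_univ f
  rw [Subalgebra.topologicalClosure_coe, hclosed.closure_eq] at hf
  simpa [hν.map_unit] using hf 1

variable {E : Type*} [AddCommGroup E] [Module ℝ E] [TopologicalSpace E] [IsTopologicalAddGroup E]
  [ContinuousSMul ℝ E] [LocallyConvexSpace ℝ E] [T2Space E]

/-- **Bauer's theorem**. -/
theorem IsState.eq_eval_of_mem_extremePoints {K : Set E} {j : C(X, E)} (hj : Function.Injective j)
    (hν : IsState 1 ν) (hK : IsCompact K) (hKc : Convex ℝ K) (hjK : ∀ x, j x ∈ K) {x : X}
    (hx : j x ∈ K.extremePoints ℝ) (hνx : IsBarycenter j ν (j x)) (f : C(X, ℝ)) : ν f = f x := by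
  refine hν.eq_eval_of_separatesPoints x (A := {f | ∃ l : E →L[ℝ] ℝ, f = (l : C(E, ℝ)).comp j})
    (fun a b hab => ?_) ?_ f
  · obtain ⟨l, hl⟩ := geometric_hahn_banach_point_point (hj.ne hab)
    exact ⟨_, ⟨l, rfl⟩, hl.ne⟩
  · rintro h _ ⟨l, rfl⟩
    exact hν.map_mul_comp hK hKc hjK hx hνx h l

end Bauer

section HahnBanach

variable {X : Type*} [TopologicalSpace X]

theorem convex_setOf_forall_pos : Convex ℝ {k : C(X, ℝ) | ∀ x, 0 < k x} :=
  fun _ ha _ hb _ _ hs ht hst x => convex_Ioi (0 : ℝ) (ha x) (hb x) hs ht hst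

variable [CompactSpace X]

theorem isOpen_setOf_forall_pos : IsOpen {k : C(X, ℝ) | ∀ x, 0 < k x} := by
  simpa [Set.MapsTo] using
    ContinuousMap.isOpen_setOfPred_mapsTo (X := X) (Y := ℝ) isCompact_univ isOpen_Ioi

theorem map_le_of_forall_pos_lt (F : C(X, ℝ) →L[ℝ] ℝ) {u : ℝ}
    (hF : ∀ k : C(X, ℝ), (∀ x, 0 < k x) → F k < u) {k : C(X, ℝ)} (hk : 0 ≤ k) : F k ≤ u := by
  have hcont : Continuous fun ε : ℝ => F (k + ε • 1) := by fun_prop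
  have hlim : Filter.Tendsto (fun ε : ℝ => F (k + ε • 1)) (nhdsWithin 0 (Set.Ioi 0))
      (nhds (F k)) := by
    simpa using (hcont.tendsto 0).mono_left nhdsWithin_le_nhds
  refine le_of_tendsto hlim (eventually_mem_nhdsWithin.mono fun ε hε => (hF _ fun x => ?_).le)
  simpa using add_pos_of_nonneg_of_pos (hk x) hε

theorem exists_isState_forall_nonpos [Nonempty X] {T : Set C(X, ℝ)} (hT : Convex ℝ T)
    (hTne : T.Nonempty) (h : ∀ k ∈ T, ∃ x, k x ≤ 0) :
    ∃ ν : C(X, ℝ) → ℝ, IsState 1 ν ∧ ∀ k ∈ T, ν k ≤ 0 := by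
  obtain ⟨F, u, hFu, huF⟩ := geometric_hahn_banach_open convex_setOf_forall_pos
    isOpen_setOf_forall_pos hT (Set.disjoint_right.2 fun k hk hpos =>
      let ⟨x, hx⟩ := h k hk
      (hpos x).not_ge hx)
  have hu : 0 ≤ u := by simpa using map_le_of_forall_pos_lt F hFu le_rfl
  have hF (k : C(X, ℝ)) (hk : 0 ≤ k) : F k ≤ 0 := by
    by_contra! hpos
    obtain ⟨n, hn⟩ := Archimedean.arch (u + 1) hpos
    have := map_le_of_forall_pos_lt F hFu (nsmul_nonneg hk n)
    rw [map_nsmul] at this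
    linarith
  have hF1 : F 1 < 0 := by
    refine (hF 1 zero_le_one).lt_of_ne fun h1 => ?_
    obtain ⟨k, hk⟩ := hTne
    have hkneg := hF (‖k‖ • 1 + k) (by
      rw [← neg_le_iff_add_nonneg', ← neg_smul]
      exact neg_norm_smul_one_le k)
    have hu' : 0 < u := h1.symm.trans_lt (hFu 1 fun _ => one_pos)
    rw [map_add, map_smul, h1, smul_zero, zero_add] at hkneg
    exact ((huF k hk).trans hkneg).not_gt hu'
  refine ⟨fun k => (F 1)⁻¹ * F k, ⟨fun f g => ?_, fun c f => ?_, fun f hf => ?_, ?_⟩, ?_⟩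
  · rw [map_add, mul_add]
  · rw [map_smul, smul_eq_mul, mul_left_comm]
  · exact mul_nonneg_of_nonpos_of_nonpos (inv_nonpos.2 hF1.le) (hF f hf)
  · exact inv_mul_cancel₀ hF1.ne
  · exact fun k hk => mul_nonpos_of_nonpos_of_nonneg (inv_nonpos.2 hF1.le) (hu.trans (huF k hk))

theorem exists_isState_forall_le [Nonempty X] {T : Set C(X, ℝ)} (hT : Convex ℝ T)
    (hTne : T.Nonempty) {c : ℝ} (h : ∀ k ∈ T, ∃ x, k x ≤ c) :
    ∃ ν : C(X, ℝ) → ℝ, IsState 1 ν ∧ ∀ k ∈ T, ν k ≤ c := by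
  obtain ⟨ν, hν, hνT⟩ := exists_isState_forall_nonpos
    (hT.translate (-(c • 1))) (hTne.image _) (by
      rintro _ ⟨k, hk, rfl⟩
      simpa [neg_add_eq_sub] using h k hk)
  refine ⟨ν, hν, fun k hk => ?_⟩
  simpa [neg_add_eq_sub, hν.map_sub, hν.map_smul_unit] using hνT _ ⟨k, hk, rfl⟩

end HahnBanach

/-! ### Boundary actions -/

section BoundaryAction

variable {X : Type*} [TopologicalSpace X] [MulAction G X] [ContinuousConstSMul G X]

/-- The translate `z ↦ f (g • z)` of a continuous function on a `G`-space. -/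
def pullbackSMul (g : G) (f : C(X, ℝ)) : C(X, ℝ) :=
  ⟨fun z => f (g • z), by fun_prop⟩

theorem pullbackSMul_apply (g : G) (f : C(X, ℝ)) (z : X) : pullbackSMul g f z = f (g • z) :=
  rfl

theorem pullbackSMul_one (f : C(X, ℝ)) : pullbackSMul (1 : G) f = f := by
  ext z
  rw [pullbackSMul_apply, one_smul]

theorem pullbackSMul_pullbackSMul (g h : G) (f : C(X, ℝ)) :
    pullbackSMul g (pullbackSMul h f) = pullbackSMul (h * g) f := by
  ext z
  simp only [pullbackSMul_apply, mul_smul]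

theorem IsState.comp_pullbackSMul {ν : C(X, ℝ) → ℝ} (hν : IsState 1 ν) (g : G) :
    IsState 1 fun f => ν (pullbackSMul g f) where
  map_add f f' := hν.map_add (pullbackSMul g f) (pullbackSMul g f')
  map_smul c f := hν.map_smul c (pullbackSMul g f)
  nonneg f hf := hν.nonneg (pullbackSMul g f) fun z => hf (g • z)
  map_unit := hν.map_unit

variable (G X) in
/-- A boundary action of `G` on a compact space `X`, encoded by averages: every continuous function
has averages over translates that are nowhere below any prescribed value smaller than its maximum. By Hahn-Banach this says that every point mass is in the weak*
closed convex hull of the orbit of every probability measure. -/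
def IsBoundaryAction : Prop :=
  ∀ (f : C(X, ℝ)) (x : X) (c : ℝ), c < f x → ∃ (S : Finset G) (w : G → ℝ),
    (∀ s ∈ S, 0 ≤ w s) ∧ ∑ s ∈ S, w s = 1 ∧ ∀ z, c < ∑ s ∈ S, w s * f (s • z)

variable [CompactSpace X]

theorem isBoundaryAction_of_forall_eval_mem [Nonempty X]
    (h : ∀ N : Set (C(X, ℝ) → ℝ), N.Nonempty → IsCompact N → Convex ℝ N →
      (∀ ν ∈ N, IsState 1 ν) → (∀ (g : G), ∀ ν ∈ N, (fun f => ν (pullbackSMul g f)) ∈ N) →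
      ∀ x : X, (fun f => f x) ∈ N) :
    IsBoundaryAction G X := by
  intro f x c hcx
  by_contra hcon
  have hT : ∀ k ∈ convexHull ℝ (Set.range fun g : G => pullbackSMul g f), ∃ z, k z ≤ c := by
    rintro k hk
    by_contra! hk'
    rw [convexHull_range_eq_exists_affineCombination] at hk
    obtain ⟨S, w, hw, hw1, rfl⟩ := hk
    refine hcon ⟨S, w, hw, hw1, fun z => (hk' z).trans_eq ?_⟩
    rw [Finset.affineCombination_eq_linear_combination _ _ _ hw1, ContinuousMap.sum_apply]
    rfl
  obtain ⟨ν₀, hν₀, hν₀c⟩ := exists_isState_forall_le (convex_convexHull ℝ _)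
    ((Set.range_nonempty _).convexHull) hT
  have hx := h ({ν | IsState 1 ν} ∩ ⋂ g : G, {ν | ν (pullbackSMul g f) ≤ c})
    ⟨ν₀, hν₀, Set.mem_iInter.2 fun g => hν₀c _ (subset_convexHull ℝ _ ⟨g, rfl⟩)⟩
    ((isCompact_setOf_isState neg_norm_smul_one_le le_norm_smul_one).inter_right
      (isClosed_iInter fun g => isClosed_le (by fun_prop) (by fun_prop)))
    ((convex_setOf_isState 1).inter (convex_iInter fun g => ?_)) (fun ν hν => hν.1)
    (fun g ν hν => ⟨hν.1.comp_pullbackSMul g, Set.mem_iInter.2 fun s => ?_⟩) x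
  · have := Set.mem_iInter.1 hx.2 (1 : G)
    rw [pullbackSMul_one] at this
    exact hcx.not_ge this
  · exact convex_halfSpace_le ⟨fun _ _ => rfl, fun _ _ => rfl⟩ c
  · change ν (pullbackSMul g (pullbackSMul s f)) ≤ c
    rw [pullbackSMul_pullbackSMul]
    exact Set.mem_iInter.1 hν.2 (s * g)

end BoundaryAction

section MinimalConvex

variable {E : Type*} [AddCommGroup E] [Module ℝ E] [TopologicalSpace E] [DistribMulAction G E]

variable (G) in
/-- Nonempty compact convex `G`-invariant subsets of a topological vector space with an action
of `G`. -/
structure IsInvariantCompactConvex (K : Set E) : Prop where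
  nonempty : K.Nonempty
  isCompact : IsCompact K
  convex : Convex ℝ K
  smul_mem : ∀ (g : G), ∀ x ∈ K, g • x ∈ K

theorem IsInvariantCompactConvex.exists_minimal [T2Space E] {K₀ : Set E}
    (hK₀ : IsInvariantCompactConvex G K₀) :
    ∃ K ⊆ K₀, Minimal (IsInvariantCompactConvex G) K := by
  refine zorn_superset_nonempty {K | IsInvariantCompactConvex G K} (fun C hC hchain hCne =>
    ⟨⋂₀ C, ⟨?_, ?_, convex_sInter fun t ht => (hC ht).convex,
      fun g x hx t ht => (hC ht).smul_mem g x (hx t ht)⟩, fun s => Set.sInter_subset_of_mem⟩)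
    K₀ hK₀
  · have : Nonempty C := hCne.to_subtype
    exact IsCompact.nonempty_sInter_of_directed_nonempty_isCompact_isClosed
      (fun a ha b hb => (hchain.total ha hb).elim (fun h => ⟨a, ha, subset_rfl, h⟩)
        fun h => ⟨b, hb, h, subset_rfl⟩)
      (fun s hs => (hC hs).nonempty) (fun s hs => (hC hs).isCompact)
      (fun s hs => (hC hs).isCompact.isClosed)
  · obtain ⟨s, hs⟩ := hCne
    exact (hC hs).isCompact.of_isClosed_subset
      (isClosed_sInter fun t ht => (hC ht).isCompact.isClosed) (Set.sInter_subset_of_mem hs)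

variable [SMulCommClass G ℝ E]

theorem IsInvariantCompactConvex.smul_mem_extremePoints {K : Set E}
    (hK : IsInvariantCompactConvex G K) (g : G) {x : E} (hx : x ∈ K.extremePoints ℝ) :
    g • x ∈ K.extremePoints ℝ := by
  have hgK : DistribMulAction.toLinearEquiv ℝ E g '' K = K :=
    (Set.image_subset_iff.2 (hK.smul_mem g)).antisymm fun y hy =>
      ⟨g⁻¹ • y, hK.smul_mem g⁻¹ y hy, smul_inv_smul g y⟩
  rw [← hgK, ← image_extremePoints]
  exact ⟨x, hx, rfl⟩

variable [ContinuousConstSMul G E]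

/-- The closure of the set of extreme points of an invariant compact convex set, as an invariant
set. -/
def extremeClosure {K : Set E} (hK : IsInvariantCompactConvex G K) : SubMulAction G E where
  carrier := closure (K.extremePoints ℝ)
  smul_mem' g _ hx :=
    map_mem_closure (continuous_const_smul g) hx fun _ => hK.smul_mem_extremePoints g

instance (Y : SubMulAction G E) : ContinuousConstSMul G Y :=
  ⟨fun g => ((continuous_const_smul g).comp continuous_subtype_val).subtype_mk _⟩

theorem IsBarycenter.smul {X : Type*} [TopologicalSpace X] [MulAction G X]
    [ContinuousConstSMul G X] {j : C(X, E)} (hj : ∀ (g : G) x, j (g • x) = g • j x)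
    {ν : C(X, ℝ) → ℝ} {b : E} (hb : IsBarycenter j ν b) (g : G) :
    IsBarycenter j (fun f => ν (pullbackSMul g f)) (g • b) := fun l => by
  let lg : E →L[ℝ] ℝ := l.comp ⟨DistribSMul.toLinearMap ℝ E g, continuous_const_smul g⟩
  have hlg : pullbackSMul g ((l : C(E, ℝ)).comp j) = (lg : C(E, ℝ)).comp j := by
    ext x
    exact congrArg l (hj g x)
  exact (hb lg).trans (congrArg ν hlg.symm)

theorem IsInvariantCompactConvex.barycenters {X : Type*} [TopologicalSpace X] [CompactSpace X]
    [MulAction G X] [ContinuousConstSMul G X] {K : Set E} (hK : IsInvariantCompactConvex G K)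
    {j : C(X, E)} (hj : ∀ (g : G) x, j (g • x) = g • j x) (hjK : ∀ x, j x ∈ K)
    {N : Set (C(X, ℝ) → ℝ)} (hNne : N.Nonempty) (hN : IsCompact N) (hNc : Convex ℝ N)
    (hNs : ∀ ν ∈ N, IsState 1 ν)
    (hNG : ∀ (g : G), ∀ ν ∈ N, (fun f => ν (pullbackSMul g f)) ∈ N) :
    IsInvariantCompactConvex G {b ∈ K | ∃ ν ∈ N, IsBarycenter j ν b} where
  nonempty := by
    obtain ⟨ν, hν⟩ := hNne
    obtain ⟨b, hbK, hb⟩ := (hNs ν hν).exists_isBarycenter hK.isCompact hK.convex hjK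
    exact ⟨b, hbK, ν, hν, hb⟩
  isCompact := by
    have hclosed : IsClosed {p : (C(X, ℝ) → ℝ) × E | IsBarycenter j p.1 p.2} := by
      simp only [IsBarycenter, Set.ofPred_forall]
      exact isClosed_iInter fun l => isClosed_eq (by fun_prop) (by fun_prop)
    convert ((hN.prod hK.isCompact).inter_right hclosed).image continuous_snd
    ext b
    constructor
    · rintro ⟨hbK, ν, hν, hb⟩
      exact ⟨(ν, b), ⟨⟨hν, hbK⟩, hb⟩, rfl⟩
    · rintro ⟨⟨ν, b⟩, ⟨⟨hν, hbK⟩, hb⟩, rfl⟩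
      exact ⟨hbK, ν, hν, hb⟩
  convex := by
    rintro x ⟨hxK, ν, hν, hx⟩ y ⟨hyK, μ, hμ, hy⟩ a b ha hb hab
    refine ⟨hK.convex hxK hyK ha hb hab, a • ν + b • μ, hNc hν hμ ha hb hab, fun l => ?_⟩
    simp [hx l, hy l]
  smul_mem := by
    rintro g b ⟨hbK, ν, hν, hb⟩
    exact ⟨hK.smul_mem g b hbK, _, hNG g ν hν, hb.smul hj g⟩

variable [IsTopologicalAddGroup E] [ContinuousSMul ℝ E] [LocallyConvexSpace ℝ E] [T2Space E]

theorem isBoundaryAction_extremeClosure {K : Set E} (hK : Minimal (IsInvariantCompactConvex G) K)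
    [CompactSpace (extremeClosure hK.prop)] [Nonempty (extremeClosure hK.prop)] :
    IsBoundaryAction G (extremeClosure hK.prop) := by
  have hXK : closure (K.extremePoints ℝ) ⊆ K :=
    closure_minimal extremePoints_subset hK.prop.isCompact.isClosed
  refine isBoundaryAction_of_forall_eval_mem fun N hNne hN hNc hNs hNG x => ?_
  let j : C(extremeClosure hK.prop, E) := ⟨Subtype.val, continuous_subtype_val⟩
  have hjK (x) : j x ∈ K := hXK x.2
  have hbary := hK.eq_of_subset (hK.prop.barycenters (j := j) (fun _ _ => rfl) hjK hNne hN hNc hNs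
    hNG) fun b hb => hb.1
  have hext (x : extremeClosure hK.prop) (hx : (x : E) ∈ K.extremePoints ℝ) :
      (fun f : C(extremeClosure hK.prop, ℝ) => f x) ∈ N := by
    obtain ⟨-, ν, hν, hνx⟩ := hbary.symm.subset (hjK x)
    rwa [← funext ((hNs ν hν).eq_eval_of_mem_extremePoints Subtype.val_injective
      hK.prop.isCompact hK.prop.convex hjK hx hνx)]
  have hclosed : IsClosed {x : extremeClosure hK.prop |
      (fun f : C(extremeClosure hK.prop, ℝ) => f x) ∈ N} :=
    hN.isClosed.preimage (continuous_pi fun f => f.continuous)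
  have hdense : Dense {x : extremeClosure hK.prop | (x : E) ∈ K.extremePoints ℝ} := by
    refine Subtype.dense_iff.2 fun x hx => closure_mono ?_ hx
    exact fun y hy => ⟨⟨y, subset_closure hy⟩, hy, rfl⟩
  exact hclosed.closure_subset_iff.2 hext (hdense x)

theorem IsInvariantCompactConvex.exists_isBoundaryAction {K : Set E}
    (hK : IsInvariantCompactConvex G K) :
    ∃ X : SubMulAction G E, (X : Set E) ⊆ K ∧ CompactSpace X ∧ Nonempty X ∧
      IsBoundaryAction G X := by
  obtain ⟨L, hLK, hL⟩ := hK.exists_minimal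
  have hsub : closure (L.extremePoints ℝ) ⊆ L :=
    closure_minimal extremePoints_subset hL.prop.isCompact.isClosed
  have hcompact : CompactSpace (extremeClosure hL.prop) :=
    isCompact_iff_compactSpace.1 (hL.prop.isCompact.of_isClosed_subset isClosed_closure hsub)
  have hnonempty : Nonempty (extremeClosure hL.prop) :=
    (hL.prop.isCompact.extremePoints_nonempty hL.prop.nonempty).closure.to_subtype
  exact ⟨_, hsub.trans hLK, hcompact, hnonempty, isBoundaryAction_extremeClosure hL⟩

end MinimalConvex

section Dirac

variable {X : Type*} [TopologicalSpace X] [MulAction G X] [ContinuousConstSMul G X]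

theorem IsBoundaryAction.exists_pos_pullbackSMul (hX : IsBoundaryAction G X) {ν : C(X, ℝ) → ℝ}
    (hν : IsState 1 ν) {f : C(X, ℝ)} {x : X} (hf : 0 < f x) :
    ∃ g : G, 0 < ν (pullbackSMul g f) := by
  obtain ⟨S, w, hw, -, hS⟩ := hX f x (f x / 2) (half_lt_self hf)
  have hle : (f x / 2) • (1 : C(X, ℝ)) ≤ ∑ s ∈ S, w s • pullbackSMul s f := fun z => by
    simpa [ContinuousMap.sum_apply, pullbackSMul_apply] using (hS z).le
  have hsum := (half_pos hf).trans_le (hν.le_of_smul_le hle)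
  simp only [hν.map_sum, hν.map_smul] at hsum
  by_contra! hneg
  exact hsum.not_ge (Finset.sum_nonpos fun s hs =>
    mul_nonpos_of_nonneg_of_nonpos (hw s hs) (hneg s))

theorem IsBoundaryAction.exists_filter_tendsto (hX : IsBoundaryAction G X) {ν : C(X, ℝ) → ℝ}
    (hν : IsState 1 ν) (x : X) : ∃ F : Filter G, F.NeBot ∧
      ∀ f, Filter.Tendsto (fun g => ν (pullbackSMul g f)) F (nhds (f x)) := by
  let U (f : C(X, ℝ)) : Set G := {g | 0 < ν (pullbackSMul g f)}
  have hU {f f' : C(X, ℝ)} (hff' : f ≤ f') : U f ⊆ U f' := fun g hg =>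
    lt_of_lt_of_le hg (hν.mono (g := pullbackSMul g f') fun z => hff' (g • z))
  let F : Filter G := ⨅ f : {f : C(X, ℝ) // 0 < f x}, Filter.principal (U f)
  have hmem {f : C(X, ℝ)} (hf : 0 < f x) : U f ∈ F :=
    Filter.mem_iInf_of_mem ⟨f, hf⟩ (Filter.mem_principal_self _)
  refine ⟨F, ?_, fun f => tendsto_order.2 ⟨fun c hc => ?_, fun c hc => ?_⟩⟩
  · have : Nonempty {f : C(X, ℝ) // 0 < f x} := ⟨⟨1, one_pos⟩⟩
    refine Filter.iInf_neBot_of_directed' (fun f f' => ⟨⟨f ⊓ f', lt_min f.2 f'.2⟩, ?_, ?_⟩)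
      fun f => Filter.principal_neBot_iff.2 (hX.exists_pos_pullbackSMul hν f.2)
    · exact Filter.principal_mono.2 (hU inf_le_left)
    · exact Filter.principal_mono.2 (hU inf_le_right)
  · filter_upwards [hmem (f := f - c • 1) (by simpa using hc)] with g hg
    have hg : 0 < ν (pullbackSMul g f - c • 1) := hg
    rwa [hν.map_sub, hν.map_smul_unit, sub_pos] at hg
  · filter_upwards [hmem (f := c • 1 - f) (by simpa using hc)] with g hg
    have hg : 0 < ν (c • 1 - pullbackSMul g f) := hg
    rwa [hν.map_sub, hν.map_smul_unit, sub_pos] at hg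

variable [CompactSpace X] [MeasurableSpace X] [BorelSpace X]

theorem isState_integral (μ : Measure X) [IsProbabilityMeasure μ] :
    IsState 1 fun f : C(X, ℝ) => ∫ y, f y ∂μ where
  map_add f g := integral_add ((BoundedContinuousFunction.mkOfCompact f).integrable μ)
    ((BoundedContinuousFunction.mkOfCompact g).integrable μ)
  map_smul c f := integral_const_mul c f
  nonneg _ hf := integral_nonneg hf
  map_unit := by simp

theorem IsBoundaryAction.diracProba_mem_closure (hX : IsBoundaryAction G X)
    (μ : ProbabilityMeasure X) (x : X) :
    diracProba x ∈ closure {ν : ProbabilityMeasure X | ∃ g : G,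
      ν = μ.map (f := fun y => g • y) (continuous_const_smul g).measurable.aemeasurable} := by
  obtain ⟨F, hF, hlim⟩ := hX.exists_filter_tendsto (isState_integral (μ : Measure X)) x
  refine mem_closure_of_tendsto (b := F) (f := fun g : G => μ.map (f := fun y => g • y)
    (continuous_const_smul g).measurable.aemeasurable) ?_ (.of_forall fun g => ⟨g, rfl⟩)
  refine ProbabilityMeasure.tendsto_iff_forall_integral_tendsto.2 fun f => ?_
  have hmap (g : G) : ∫ y, f y ∂((μ.map (f := fun y => g • y)
      (continuous_const_smul g).measurable.aemeasurable : ProbabilityMeasure X) : Measure X) =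
      ∫ y, f (g • y) ∂(μ : Measure X) := by
    rw [ProbabilityMeasure.toMeasure_map, integral_map
      (continuous_const_smul g).measurable.aemeasurable f.continuous.aestronglyMeasurable]
  have hdirac : ∫ y, f y ∂(diracProba x : Measure X) = f x :=
    integral_dirac' _ _ f.continuous.stronglyMeasurable
  simp only [hmap, hdirac]
  exact hlim f.toContinuousMap

end Dirac

/-! ### The reduced group C⋆-algebra -/

theorem lreg_apply (g : G) (ξ : ℓ²(G, ℂ)) (k : G) : lreg g ξ k = ξ (g⁻¹ * k) := by
  unfold lreg lregE
  rfl

theorem norm_lreg_apply (g : G) (ξ : ℓ²(G, ℂ)) : ‖lreg g ξ‖ = ‖ξ‖ := by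
  unfold lreg
  exact (lregE g).norm_map ξ

/-- The left regular representation as a homomorphism into the bounded operators. -/
def lregHom : G →* (ℓ²(G, ℂ) →L[ℂ] ℓ²(G, ℂ)) where
  toFun := lreg
  map_one' := by
    ext ξ k
    simp [lreg_apply]
  map_mul' g h := by
    ext ξ k
    simp [lreg_apply, mul_assoc]

theorem lreg_mul (g h : G) : lreg (g * h) = lreg g * lreg h :=
  map_mul lregHom g h

theorem inner_lreg_lreg (g : G) (ξ η : ℓ²(G, ℂ)) :
    inner ℂ (lreg g ξ) (lreg g η) = inner ℂ ξ η := by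
  unfold lreg
  exact (lregE g).inner_map_map ξ η

theorem inner_lreg_right (g : G) (ξ η : ℓ²(G, ℂ)) :
    inner ℂ ξ (lreg g η) = inner ℂ (lreg g⁻¹ ξ) η := by
  rw [← inner_lreg_lreg g⁻¹, ← mul_apply_eq_comp, ← lreg_mul, inv_mul_cancel]
  exact congrArg _ (congrArg (· η) (map_one lregHom))

theorem star_lreg (g : G) : star (lreg g) = lreg g⁻¹ := by
  refine ContinuousLinearMap.ext fun η => ext_inner_left ℂ fun ξ => ?_
  rw [inner_lreg_right, inv_inv]
  exact ContinuousLinearMap.adjoint_inner_right _ _ _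

theorem coe_uu (g : G) : (uu g : ℓ²(G, ℂ) →L[ℂ] ℓ²(G, ℂ)) = lreg g := by
  unfold uu
  rfl

theorem uu_one : uu (1 : G) = 1 :=
  Subtype.ext ((coe_uu 1).trans (map_one lregHom))

theorem uu_mul (g h : G) : uu (g * h) = uu g * uu h := by
  apply Subtype.ext
  rw [MulMemClass.coe_mul, coe_uu, coe_uu, coe_uu, lreg_mul]

theorem uu_inv_mul_uu (g : G) : uu g⁻¹ * uu g = 1 := by
  rw [← uu_mul, inv_mul_cancel, uu_one]

theorem star_uu (g : G) : star (uu g) = uu g⁻¹ := by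
  apply Subtype.ext
  rw [StarMemClass.coe_star, coe_uu, coe_uu, star_lreg]

theorem redCstar_eq_topologicalClosure_adjoin :
    redCstar G = (StarAlgebra.adjoin ℂ (Set.range (lreg (G := G)))).topologicalClosure := by
  unfold redCstar
  rfl

theorem isClosed_redCstar : IsClosed (redCstar G : Set (ℓ²(G, ℂ) →L[ℂ] ℓ²(G, ℂ))) := by
  rw [redCstar_eq_topologicalClosure_adjoin]
  exact StarSubalgebra.isClosed_topologicalClosure _

instance : CompleteSpace (redCstar G) :=
  isClosed_redCstar.isComplete.completeSpace_coe

theorem adjoin_range_lreg_eq_span :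
    (StarAlgebra.adjoin ℂ (Set.range (lreg (G := G)))).toSubalgebra.toSubmodule =
      Submodule.span ℂ (Set.range (lreg (G := G))) := by
  have hstar : star (Set.range (lreg (G := G))) ⊆ Set.range lreg := by
    rintro _ ⟨g, hg⟩
    exact ⟨g⁻¹, by rw [← star_lreg, hg, star_star]⟩
  rw [StarAlgebra.adjoin_eq_span, Set.union_eq_left.2 hstar]
  exact congrArg _ (congrArg _ (Submonoid.closure_eq (MonoidHom.mrange lregHom)))

theorem dense_span_range_uu :
    Dense (Submodule.span ℂ (Set.range (uu (G := G))) : Set (redCstar G)) := by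
  refine Subtype.dense_iff.2 fun a ha => ?_
  rw [SetLike.mem_coe, redCstar_eq_topologicalClosure_adjoin, ← SetLike.mem_coe,
    StarSubalgebra.topologicalClosure_coe] at ha
  refine closure_mono (fun b hb => ?_) ha
  have hb' : b ∈ Submodule.span ℂ (Set.range (lreg (G := G))) :=
    adjoin_range_lreg_eq_span.le hb
  rw [← funext coe_uu, Set.range_comp' Subtype.val uu] at hb'
  exact (Submodule.map_span (redCstar G).subtype.toLinearMap (Set.range uu)).ge hb'

instance : LocallyConvexSpace ℝ (WeakDual ℂ (redCstar G)) :=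
  inferInstanceAs (LocallyConvexSpace ℝ (WeakBilin (topDualPairing ℂ (redCstar G))))

theorem deltaOne_eq_single [DecidableEq G] :
    deltaOne = (lp.single 2 (1 : G) 1 : ℓ²(G, ℂ)) := by
  unfold deltaOne
  congr!

/-- The vector `δ_g ∈ ℓ²(G)`. -/
def delta (g : G) : ℓ²(G, ℂ) :=
  lreg g deltaOne

theorem delta_apply [DecidableEq G] (g k : G) : delta g k = if k = g then (1 : ℂ) else 0 := by
  rw [delta, lreg_apply, deltaOne_eq_single, lp.coeFn_single, Pi.single_apply]
  simp [inv_mul_eq_one, eq_comm]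

theorem inner_delta (g : G) (ξ : ℓ²(G, ℂ)) : inner ℂ (delta g) ξ = ξ g := by
  classical
  rw [delta, ← inv_inv g, ← inner_lreg_right, deltaOne_eq_single, lp.inner_single_left, lreg_apply]
  simp

theorem tau_apply (a : redCstar G) :
    tau G a = inner ℂ deltaOne ((a : ℓ²(G, ℂ) →L[ℂ] ℓ²(G, ℂ)) deltaOne) := by
  unfold tau
  rfl

theorem tau_uu_mul_mul_uu (a : redCstar G) (h k : G) :
    tau G (uu h * a * uu k) = (a : ℓ²(G, ℂ) →L[ℂ] ℓ²(G, ℂ)) (delta k) h⁻¹ := by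
  rw [tau_apply, MulMemClass.coe_mul, MulMemClass.coe_mul, coe_uu, coe_uu,
    mul_apply_eq_comp, mul_apply_eq_comp, inner_lreg_right]
  exact inner_delta _ _

theorem tau_uu [DecidableEq G] (g : G) : tau G (uu g) = if g = 1 then 1 else 0 := by
  have h := tau_uu_mul_mul_uu (1 : redCstar G) 1 g
  rw [uu_one, one_mul, one_mul] at h
  exact h.trans (by simp [delta_apply, eq_comm])

theorem tau_one : tau G 1 = 1 := by
  classical
  rw [← uu_one, tau_uu, if_pos rfl]

instance : Nontrivial (redCstar G) :=
  ⟨⟨1, 0, fun h => one_ne_zero (tau_one.symm.trans ((congrArg (tau G) h).trans (map_zero _)))⟩⟩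

theorem eq_zero_of_forall_tau_eq_zero {a : redCstar G}
    (h : ∀ g k, tau G (uu g * a * uu k) = 0) : a = 0 := by
  classical
  have hδ (k : G) : (a : ℓ²(G, ℂ) →L[ℂ] ℓ²(G, ℂ)) (delta k) = 0 := by
    ext j
    have := h j⁻¹ k
    rwa [tau_uu_mul_mul_uu, inv_inv] at this
  refine Subtype.ext (ContinuousLinearMap.ext fun ξ => ?_)
  have hξ := (lp.hasSum_single (p := 2) (by norm_num) ξ).mapL (a : ℓ²(G, ℂ) →L[ℂ] ℓ²(G, ℂ))
  refine hξ.unique ?_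
  have hsingle (k : G) : (lp.single 2 k (ξ k) : ℓ²(G, ℂ)) = ξ k • delta k := by
    ext j
    simp [Pi.single_apply, delta_apply]
  simp only [hsingle, map_smul, hδ, smul_zero]
  exact hasSum_zero

theorem norm_uu_le_one (g : G) : ‖uu g‖ ≤ 1 := by
  refine (congrArg norm (coe_uu g)).trans_le ?_
  exact ContinuousLinearMap.opNorm_le_bound _ zero_le_one fun ξ => by
    rw [norm_lreg_apply, one_mul]

theorem norm_uu_mul_mul_uu_le (g h : G) (a : redCstar G) : ‖uu g * a * uu h‖ ≤ ‖a‖ :=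
  calc ‖uu g * a * uu h‖ ≤ ‖uu g‖ * ‖a‖ * ‖uu h‖ := norm_mul₃_le
    _ ≤ 1 * ‖a‖ * 1 := by
      gcongr
      · exact norm_uu_le_one g
      · exact norm_uu_le_one h
    _ = ‖a‖ := by rw [one_mul, mul_one]

/-! ### The dual space -/

instance : DistribMulAction G (WeakDual ℂ (redCstar G)) where
  smul := dualAct
  one_smul φ := DFunLike.ext _ _ fun a => congrArg φ (by rw [inv_one, uu_one, one_mul, mul_one])
  mul_smul g h φ := DFunLike.ext _ _ fun a => congrArg φ (by
    rw [mul_inv_rev, uu_mul, uu_mul]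
    simp only [mul_assoc])
  smul_zero _ := rfl
  smul_add _ _ _ := rfl

theorem smul_dual_apply (g : G) (φ : WeakDual ℂ (redCstar G)) (a : redCstar G) :
    (g • φ) a = φ (uu g⁻¹ * a * uu g) :=
  rfl

instance : SMulCommClass G ℝ (WeakDual ℂ (redCstar G)) :=
  ⟨fun _ _ _ => rfl⟩

instance : SMulCommClass G ℂ (WeakDual ℂ (redCstar G)) :=
  ⟨fun _ _ _ => rfl⟩

instance : ContinuousConstSMul G (WeakDual ℂ (redCstar G)) :=
  ⟨dualAct_continuous⟩

theorem dual_ext {φ ψ : WeakDual ℂ (redCstar G)} (h : ∀ g, φ (uu g) = ψ (uu g)) : φ = ψ :=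
  ContinuousLinearMap.ext_on dense_span_range_uu (Set.forall_mem_range.2 h)

theorem smul_tau (g : G) : g • tau G = tau G := by
  classical
  refine dual_ext fun k => ?_
  rw [smul_dual_apply, ← uu_mul, ← uu_mul, tau_uu, tau_uu]
  simp [inv_mul_eq_one, mul_assoc]

theorem isDualBoundary_of_isBoundaryAction {Y : SubMulAction G (WeakDual ℂ (redCstar G))}
    [CompactSpace Y] [Nonempty Y] (hY : IsBoundaryAction G Y) :
    IsDualBoundary G (Y : Set (WeakDual ℂ (redCstar G))) := by
  let _ : MeasurableSpace Y := borel Y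
  have : BorelSpace Y := ⟨rfl⟩
  exact ⟨Set.nonempty_coe_sort.1 ‹_›, isCompact_iff_compactSpace.2 ‹_›,
    fun g _ h => Y.smul_mem g h, fun μ x => hY.diracProba_mem_closure μ x⟩

theorem IsDualBoundary.eq_singleton {B : Set (WeakDual ℂ (redCstar G))} (hB : IsDualBoundary G B)
    {φ : WeakDual ℂ (redCstar G)} (hφB : φ ∈ B) (hφ : ∀ g : G, g • φ = φ) : B = {φ} := by
  obtain ⟨-, hBc, hinv, hdirac⟩ := hB
  let _ : MeasurableSpace B := borel B
  have : BorelSpace B := ⟨rfl⟩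
  have : CompactSpace B := isCompact_iff_compactSpace.1 hBc
  refine Set.eq_singleton_iff_unique_mem.2 ⟨hφB, fun ψ hψ => ?_⟩
  have hspec : diracProba (⟨φ, hφB⟩ : B) ⤳ diracProba ⟨ψ, hψ⟩ := by
    refine specializes_iff_mem_closure.2 (closure_mono ?_ (hdirac (diracProba ⟨φ, hφB⟩) ⟨ψ, hψ⟩))
    rintro _ ⟨g, rfl⟩
    exact Subtype.ext ((Measure.map_dirac' (Continuous.measurable (((dualAct_continuous g).comp
      continuous_subtype_val).subtype_mk _)) _).trans (congrArg _ (Subtype.ext (hφ g))))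
  exact congrArg Subtype.val (isEmbedding_diracProba.isInducing.specializes_iff.1 hspec).eq.symm

/-! ### Ideals from boundaries -/

section UnitalAnnihilator

variable {A : Type*} [NormedRing A] [NormedAlgebra ℂ A]

/-- The contractive functionals on a normed algebra that are normalised at the unit and vanish on
the left ideal `I`. -/
def unitalAnnihilator (I : Ideal A) : Set (WeakDual ℂ A) :=
  {φ | φ 1 = 1 ∧ (∀ a, ‖φ a‖ ≤ ‖a‖) ∧ ∀ a ∈ I, φ a = 0}

theorem isCompact_setOf_norm_le : IsCompact {φ : WeakDual ℂ A | ∀ a, ‖φ a‖ ≤ ‖a‖} := by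
  refine (WeakDual.isCompact_closedBall (0 : StrongDual ℂ A) 1).of_isClosed_subset ?_
    fun φ hφ => ?_
  · rw [Set.ofPred_forall]
    exact isClosed_iInter fun a => isClosed_le (WeakDual.eval_continuous a).norm continuous_const
  · rw [Set.mem_preimage, mem_closedBall_zero_iff]
    exact ContinuousLinearMap.opNorm_le_bound _ zero_le_one fun a =>
      (hφ a).trans_eq (one_mul _).symm

theorem isCompact_unitalAnnihilator (I : Ideal A) : IsCompact (unitalAnnihilator I) := by
  refine isCompact_setOf_norm_le.of_isClosed_subset ?_ fun φ hφ => hφ.2.1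
  simp only [unitalAnnihilator, Set.ofPred_and, Set.ofPred_forall]
  exact (isClosed_eq (WeakDual.eval_continuous _) continuous_const).inter
    ((isClosed_iInter fun a => isClosed_le (WeakDual.eval_continuous a).norm continuous_const).inter
      (isClosed_iInter fun a => isClosed_iInter fun _ =>
        isClosed_eq (WeakDual.eval_continuous _) continuous_const))

theorem convex_unitalAnnihilator (I : Ideal A) : Convex ℝ (unitalAnnihilator I) := by
  intro φ hφ ψ hψ s t hs ht hst
  refine ⟨?_, fun a => ?_, fun a ha => ?_⟩
  · change s • φ 1 + t • ψ 1 = 1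
    rw [hφ.1, hψ.1, ← add_smul, hst, one_smul]
  · exact mem_closedBall_zero_iff.1 (convex_closedBall (0 : ℂ) ‖a‖
      (mem_closedBall_zero_iff.2 (hφ.2.1 a)) (mem_closedBall_zero_iff.2 (hψ.2.1 a)) hs ht hst)
  · change s • φ a + t • ψ a = 0
    rw [hφ.2.2 a ha, hψ.2.2 a ha, smul_zero, smul_zero, add_zero]

theorem unitalAnnihilator_nonempty [CompleteSpace A] [NormOneClass A] {I : Ideal A} (hI : I ≠ ⊤) :
    (unitalAnnihilator I).Nonempty := by
  let M : Submodule ℂ A := I.restrictScalars ℂ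
  have hnorm : ‖(M.mkQ 1 : A ⧸ M)‖ = 1 := by
    refine ((Submodule.Quotient.norm_mk_le M 1).trans_eq norm_one).antisymm ?_
    refine le_of_forall_pos_lt_add fun ε hε => ?_
    obtain ⟨m, hm, hlt⟩ := Submodule.Quotient.norm_mk_lt (M.mkQ 1 : A ⧸ M) hε
    refine lt_of_le_of_lt (not_lt.1 fun hm1 => hI ?_) hlt
    exact I.eq_top_of_norm_lt_one ((Submodule.Quotient.eq M).1 hm.symm) (by rwa [sub_sub_cancel])
  obtain ⟨φ, hφ, hφ1⟩ := exists_dual_vector'' ℂ (M.mkQ 1 : A ⧸ M)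
  refine ⟨StrongDual.toWeakDual (φ.comp ⟨M.mkQ, continuous_quot_mk⟩), ?_, fun a => ?_,
    fun a ha => ?_⟩
  · exact hφ1.trans (by rw [hnorm, RCLike.ofReal_one])
  · exact (φ.le_of_opNorm_le hφ _).trans
      ((one_mul _).trans_le (Submodule.Quotient.norm_mk_le M a))
  · exact (congrArg φ ((Submodule.Quotient.mk_eq_zero M).2 ha)).trans (map_zero φ)

end UnitalAnnihilator

theorem isInvariantCompactConvex_unitalAnnihilator {I : TwoSidedIdeal (redCstar G)} (hI : I ≠ ⊤) :
    IsInvariantCompactConvex G (unitalAnnihilator I.asIdeal) where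
  nonempty := unitalAnnihilator_nonempty fun htop => hI (eq_top_iff.2 fun a _ => by
    rw [← TwoSidedIdeal.mem_asIdeal, htop]
    exact Submodule.mem_top)
  isCompact := isCompact_unitalAnnihilator _
  convex := convex_unitalAnnihilator _
  smul_mem g φ hφ := by
    refine ⟨?_, fun a => ?_, fun a ha => ?_⟩
    · rw [smul_dual_apply, mul_one, uu_inv_mul_uu, hφ.1]
    · exact (hφ.2.1 _).trans (norm_uu_mul_mul_uu_le _ _ _)
    · exact hφ.2.2 _ (I.mul_mem_right _ _ (I.mul_mem_left _ _ ha))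

theorem IsInvariantCompactConvex.exists_isDualBoundary {K : Set (WeakDual ℂ (redCstar G))}
    (hK : IsInvariantCompactConvex G K) : ∃ B ⊆ K, IsDualBoundary G B := by
  obtain ⟨X, hXK, _, _, hX⟩ := hK.exists_isBoundaryAction
  exact ⟨X, hXK, isDualBoundary_of_isBoundaryAction hX⟩

theorem isCstarSimple_of_forall_isDualBoundary
    (h : ∀ B : Set (WeakDual ℂ (redCstar G)), IsDualBoundary G B → ∃ c : ℂ, B = {c • tau G}) :
    IsCstarSimple G := by
  refine fun I _ => or_iff_not_imp_right.2 fun hI => eq_bot_iff.2 fun a ha => ?_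
  obtain ⟨B, hBI, hB⟩ := (isInvariantCompactConvex_unitalAnnihilator hI).exists_isDualBoundary
  obtain ⟨c, rfl⟩ := h B hB
  obtain ⟨hc1 : c * tau G 1 = 1, -, hcI⟩ := hBI rfl
  have hc : c = 1 := by rwa [tau_one, mul_one] at hc1
  rw [hc, one_smul] at hcI
  exact (TwoSidedIdeal.mem_bot _).2 (eq_zero_of_forall_tau_eq_zero fun g k =>
    hcI _ (I.mul_mem_right _ _ (I.mul_mem_left _ _ ha)))

/-! ### A compactness principle -/

theorem exists_mem_forall_eq_of_isCompact {Z ι Y : Type*} [TopologicalSpace Z] [MetricSpace Y]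
    {K : Set Z} (hK : IsCompact K) {e : ι → Z → Y} (he : ∀ i, Continuous (e i)) {c : ι → Y}
    (h : ∀ (S : Finset ι) (ε : ℝ), 0 < ε → ∃ z ∈ K, ∀ i ∈ S, dist (e i z) (c i) ≤ ε) :
    ∃ z ∈ K, ∀ i, e i z = c i := by
  classical
  obtain ⟨z, hzK, hz⟩ :
      (K ∩ ⋂ p : ι × ℕ, {z | dist (e p.1 z) (c p.1) ≤ 1 / (p.2 + 1)}).Nonempty := by
    refine hK.inter_iInter_nonempty _ (fun p => isClosed_le (by fun_prop) continuous_const)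
      fun S => ?_
    obtain ⟨z, hzK, hz⟩ := h (S.image Prod.fst) (1 / (S.sup Prod.snd + 1)) (by positivity)
    refine ⟨z, hzK, Set.mem_iInter₂.2 fun p hp => (hz _ (Finset.mem_image_of_mem _ hp)).trans ?_⟩
    have hle : p.2 ≤ S.sup Prod.snd := Finset.le_sup (f := Prod.snd) hp
    gcongr
  refine ⟨z, hzK, fun i => dist_le_zero.1 (ge_of_tendsto' tendsto_one_div_add_atTop_nhds_zero_nat
    fun n => Set.mem_iInter.1 hz (i, n))⟩

/-! ### Amenable stabilisers -/

open scoped BoundedContinuousFunction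

section InvariantMean

variable {Γ : Type*} [Group Γ] {Y : Type*} [TopologicalSpace Y] [MulAction Γ Y]
  [ContinuousConstSMul Γ Y]

/-- The translate `y ↦ f (g • y)` of a bounded continuous function on a `Γ`-space. -/
def translateFun (g : Γ) (f : Y →ᵇ ℝ) : Y →ᵇ ℝ :=
  f.compContinuous ⟨(g • ·), continuous_const_smul g⟩

instance : DistribMulAction Γ ((Y →ᵇ ℝ) → ℝ) where
  smul g m f := m (translateFun g f)
  one_smul m := funext fun f => congrArg m (BoundedContinuousFunction.ext fun y =>
    congrArg f (one_smul Γ y))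
  mul_smul g h m := funext fun f => congrArg m (BoundedContinuousFunction.ext fun y =>
    congrArg f (mul_smul g h y))
  smul_zero _ := rfl
  smul_add _ _ _ := rfl

theorem smul_mean_apply (g : Γ) (m : (Y →ᵇ ℝ) → ℝ) (f : Y →ᵇ ℝ) :
    (g • m) f = m (translateFun g f) := rfl

instance : SMulCommClass Γ ℝ ((Y →ᵇ ℝ) → ℝ) := ⟨fun _ _ _ => rfl⟩

instance : ContinuousConstSMul Γ ((Y →ᵇ ℝ) → ℝ) :=
  ⟨fun g => continuous_pi fun f => continuous_apply (translateFun g f)⟩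

variable (Γ) in
/-- Invariant means on the bounded continuous functions on a `Γ`-space. For a discrete group `Γ`
acting on itself by left translation, the existence of one is amenability. -/
structure IsInvariantMean (m : (Y →ᵇ ℝ) → ℝ) : Prop extends IsState 1 m where
  smul_eq : ∀ g : Γ, g • m = m

theorem IsInvariantMean.comp {Z : Type*} [TopologicalSpace Z] [MulAction Γ Z]
    [ContinuousConstSMul Γ Z] {m : (Y →ᵇ ℝ) → ℝ} (hm : IsInvariantMean Γ m) {p : C(Y, Z)}
    (hp : ∀ (g : Γ) y, p (g • y) = g • p y) :
    IsInvariantMean Γ fun f : Z →ᵇ ℝ => m (f.compContinuous p) where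
  map_add f f' := hm.map_add (f.compContinuous p) (f'.compContinuous p)
  map_smul c f := hm.map_smul c (f.compContinuous p)
  nonneg f hf := hm.nonneg (f.compContinuous p) fun y => hf (p y)
  map_unit := hm.map_unit
  smul_eq g := funext fun f => by
    have htr : (translateFun g f).compContinuous p = translateFun g (f.compContinuous p) :=
      BoundedContinuousFunction.ext fun y => congrArg f (hp g y).symm
    exact (congrArg m htr).trans (congrFun (hm.smul_eq g) (f.compContinuous p))

variable (Γ Y) in
theorem isInvariantCompactConvex_setOf_isState [Nonempty Y] :
    IsInvariantCompactConvex Γ {m : (Y →ᵇ ℝ) → ℝ | IsState 1 m} where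
  nonempty := ⟨fun f => f (Classical.arbitrary Y), fun _ _ => rfl, fun _ _ => rfl,
    fun _ hf => hf _, rfl⟩
  isCompact := by
    refine isCompact_setOf_isState (C := fun f => ‖f‖) (fun f y => ?_) fun f y => ?_
    · simpa using (abs_le.1 (f.norm_coe_le_norm y)).1
    · simpa using (abs_le.1 (f.norm_coe_le_norm y)).2
  convex := convex_setOf_isState 1
  smul_mem g m hm := ⟨fun f f' => hm.map_add (translateFun g f) (translateFun g f'),
    fun c f => hm.map_smul c (translateFun g f),
    fun f hf => hm.nonneg (translateFun g f) fun y => hf (g • y), hm.map_unit⟩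

theorem exists_smul_equivariant_map_subgroup (H : Subgroup G) :
    ∃ p : G → H, ∀ (h : H) (g : G), p (h • g) = h • p g := by
  obtain ⟨T, hT, -⟩ := H.exists_isComplement_right 1
  exact ⟨fun g => (hT.equiv g).1, fun h g => congrArg Prod.fst (hT.equiv_mul_left h g)⟩

variable (G) in
theorem exists_isBoundaryAction_isInvariantMean_stabilizer [TopologicalSpace G]
    [DiscreteTopology G] :
    ∃ X : SubMulAction G ((G →ᵇ ℝ) → ℝ), CompactSpace X ∧ Nonempty X ∧ IsBoundaryAction G X ∧
      ∀ x : X, ∃ m : (MulAction.stabilizer G x →ᵇ ℝ) → ℝ,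
        IsInvariantMean (MulAction.stabilizer G x) m := by
  obtain ⟨X, hXS, hcompact, hnonempty, hX⟩ :=
    (isInvariantCompactConvex_setOf_isState G G).exists_isBoundaryAction
  refine ⟨X, hcompact, hnonempty, hX, fun x => ?_⟩
  obtain ⟨p, hp⟩ := exists_smul_equivariant_map_subgroup (MulAction.stabilizer G x)
  have hx : IsInvariantMean (MulAction.stabilizer G x) (x : (G →ᵇ ℝ) → ℝ) :=
    { hXS x.2 with smul_eq := fun h => congrArg Subtype.val (MulAction.mem_stabilizer_iff.1 h.2) }
  exact ⟨_, hx.comp (p := ⟨p, continuous_of_discreteTopology⟩) hp⟩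

theorem IsInvariantMean.exists_sum_sub_lt [TopologicalSpace Γ] [DiscreteTopology Γ]
    {m : (Γ →ᵇ ℝ) → ℝ} (hm : IsInvariantMean Γ m) (S : Finset Γ) (f : Γ → Γ →ᵇ ℝ) {c : ℝ}
    (hc : 0 < c) : ∃ k : Γ, ∑ h ∈ S, (f h (h * k) - f h k) < c := by
  by_contra! hle
  have hzero : m (∑ h ∈ S, (translateFun h (f h) - f h)) = 0 := by
    rw [hm.map_sum]
    refine Finset.sum_eq_zero fun h _ => ?_
    rw [hm.map_sub, ← smul_mean_apply h m, hm.smul_eq, sub_self]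
  refine hc.not_ge (hzero ▸ hm.le_of_smul_le fun k => ?_)
  simpa [translateFun] using hle k

theorem IsInvariantMean.exists_map_single_sub_single_lt [TopologicalSpace Γ] [DiscreteTopology Γ]
    {m : (Γ →ᵇ ℝ) → ℝ} (hm : IsInvariantMean Γ m) {Y : Type*} [DecidableEq Y] [MulAction Γ Y]
    (y₀ : Y) {S : Finset Γ} (F : (S → lp (fun _ : Y => ℝ) 1) →L[ℝ] ℝ) {c : ℝ} (hc : 0 < c) :
    ∃ k : Γ, F (fun h => lp.single 1 ((h : Γ) • k • y₀) 1 - lp.single 1 (k • y₀) 1) < c := by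
  classical
  let v (h : S) (y : Y) : S → lp (fun _ : Y => ℝ) 1 := Pi.single h (lp.single 1 y 1)
  have hv (h : S) (y : Y) : ‖v h y‖ ≤ 1 := by
    rw [Pi.norm_single, lp.norm_single (by norm_num), norm_one]
  let f (h : Γ) : Γ →ᵇ ℝ := BoundedContinuousFunction.ofNormedAddCommGroupDiscrete
    (fun k => if hh : h ∈ S then F (v ⟨h, hh⟩ (k • y₀)) else 0) ‖F‖ fun k => by
      split_ifs
      · exact F.le_of_opNorm_le_of_le le_rfl (hv _ _) |>.trans_eq (mul_one _)
      · simp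
  obtain ⟨k, hk⟩ := hm.exists_sum_sub_lt S f hc
  refine ⟨k, lt_of_eq_of_lt ?_ hk⟩
  let x (h : S) : lp (fun _ : Y => ℝ) 1 := lp.single 1 ((h : Γ) • k • y₀) 1 - lp.single 1 (k • y₀) 1
  change F x = _
  rw [← Finset.univ_sum_single x, map_sum F, ← Finset.sum_coe_sort S]
  refine Finset.sum_congr rfl fun h _ => ?_
  simp [x, f, v, Pi.single_sub, mul_smul]

end InvariantMean

section Reiter

/-- The probability densities on a set `Y` that are supported in `T`. -/
def probDensities {Y : Type*} (T : Set Y) : Set (Y → ℝ) :=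
  {p | 0 ≤ p ∧ HasSum p 1 ∧ ∀ y ∉ T, p y = 0}

theorem convex_probDensities {Y : Type*} (T : Set Y) : Convex ℝ (probDensities T) := by
  rintro p ⟨hp0, hp1, hpT⟩ q ⟨hq0, hq1, hqT⟩ s t hs ht hst
  refine ⟨by positivity, ?_, fun y hy => ?_⟩
  · have hsum := (hp1.mul_left s).add (hq1.mul_left t)
    rwa [mul_one, mul_one, hst] at hsum
  · simp [hpT y hy, hqT y hy]

theorem single_mem_probDensities {Y : Type*} [DecidableEq Y] {T : Set Y} {y : Y} (hy : y ∈ T) :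
    Pi.single y 1 ∈ probDensities T :=
  ⟨by simp, hasSum_pi_single _ _,
    fun _ hz => Pi.single_eq_of_ne (ne_of_mem_of_not_mem hy hz).symm _⟩

-- Day's argument: a functional separating `0` from the differences `(h • p - p)_{h ∈ S}` would
-- contradict the invariance of the mean already on point masses `p`.
theorem IsInvariantMean.exists_almost_invariant {Γ : Type*} [Group Γ] [TopologicalSpace Γ]
    [DiscreteTopology Γ] {m : (Γ →ᵇ ℝ) → ℝ} (hm : IsInvariantMean Γ m) {Y : Type*}
    [MulAction Γ Y] (y₀ : Y) (S : Finset Γ) {ε : ℝ} (hε : 0 < ε) :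
    ∃ p ∈ probDensities (MulAction.orbit Γ y₀),
      ∀ h ∈ S, ∃ d ≤ ε, HasSum (fun y => |p (h⁻¹ • y) - p y|) d := by
  classical
  let Q : Set (S → lp (fun _ : Y => ℝ) 1) :=
    {x | ∃ p ∈ probDensities (MulAction.orbit Γ y₀), ∀ h y, x h y = p ((h : Γ)⁻¹ • y) - p y}
  have hQ : Convex ℝ Q := by
    rintro x ⟨p, hp, hx⟩ z ⟨q, hq, hz⟩ s t hs ht hst
    refine ⟨s • p + t • q, convex_probDensities _ hp hq hs ht hst, fun h y => ?_⟩
    simp only [Pi.add_apply, Pi.smul_apply, lp.coeFn_add, lp.coeFn_smul, smul_eq_mul, hx, hz]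
    ring
  have hdirac (k : Γ) : (fun h : S => lp.single 1 ((h : Γ) • k • y₀) (1 : ℝ) -
      lp.single 1 (k • y₀) 1) ∈ Q :=
    ⟨_, single_mem_probDensities ⟨k, rfl⟩, fun h y => by
      simp [Pi.single_apply, inv_smul_eq_iff]⟩
  have hmem : (0 : S → lp (fun _ : Y => ℝ) 1) ∈ closure Q := by
    by_contra h0
    obtain ⟨F, u, hF0, hF⟩ := geometric_hahn_banach_point_closed hQ.closure isClosed_closure h0
    obtain ⟨k, hk⟩ := hm.exists_map_single_sub_single_lt y₀ F (F.map_zero.symm.trans_lt hF0)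
    exact hk.not_gt (hF _ (subset_closure (hdirac k)))
  obtain ⟨x, ⟨p, hp, hx⟩, hxε⟩ := Metric.mem_closure_iff.1 hmem ε hε
  rw [dist_zero_left] at hxε
  refine ⟨p, hp, fun h hh => ⟨‖x ⟨h, hh⟩‖, (norm_le_pi_norm x _).trans hxε.le, ?_⟩⟩
  simpa [hx] using lp.hasSum_norm (p := 1) (by norm_num) (x ⟨h, hh⟩)

end Reiter

section VectorState

theorem hasSum_norm_sq {ι : Type*} (ξ : ℓ²(ι, ℂ)) : HasSum (fun k => ‖ξ k‖ ^ 2) (‖ξ‖ ^ 2) := by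
  simpa using lp.hasSum_norm (p := 2) (by norm_num) ξ

theorem sq_sqrt_sub_sqrt_le {a b : ℝ} (ha : 0 ≤ a) (hb : 0 ≤ b) : (√a - √b) ^ 2 ≤ |a - b| := by
  have hfactor : a - b = (√a - √b) * (√a + √b) := by
    linear_combination Real.sq_sqrt hb - Real.sq_sqrt ha
  have hle : |√a - √b| ≤ √a + √b := by
    simpa [abs_of_nonneg] using abs_sub (√a) (√b)
  rw [hfactor, abs_mul, ← sq_abs, sq, abs_of_nonneg (a := √a + √b) (by positivity)]
  gcongr

theorem exists_norm_eq_one_norm_lreg_sub_le [TopologicalSpace G] [DiscreteTopology G]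
    {H : Subgroup G} {m : (H →ᵇ ℝ) → ℝ} (hm : IsInvariantMean H m) (S : Finset G) {ε : ℝ}
    (hε : 0 < ε) :
    ∃ ξ : ℓ²(G, ℂ), ‖ξ‖ = 1 ∧ (∀ k ∉ H, ξ k = 0) ∧
      ∀ h ∈ S, h ∈ H → ‖lreg h ξ - ξ‖ ≤ ε := by
  obtain ⟨p, ⟨hp0, hp1, hpH⟩, hp⟩ :=
    hm.exists_almost_invariant (1 : G) (S.preimage _ Subtype.val_injective.injOn) (pow_pos hε 2)
  have hsq (k : G) : ‖(√(p k) : ℂ)‖ ^ 2 = p k := by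
    rw [Complex.norm_real, Real.norm_eq_abs, sq_abs, Real.sq_sqrt (hp0 k)]
  let ξ : ℓ²(G, ℂ) := ⟨fun k => √(p k),
    memℓp_gen (by simpa [-Complex.norm_real, hsq] using hp1.summable)⟩
  have hξ (k : G) : ξ k = √(p k) := rfl
  refine ⟨ξ, ?_, fun k hk => ?_, fun h hS hH => ?_⟩
  · have hnorm : ‖ξ‖ ^ 2 = 1 := (hasSum_norm_sq ξ).unique (by simpa only [hξ, hsq] using hp1)
    exact (pow_eq_one_iff_of_nonneg (norm_nonneg ξ) two_ne_zero).1 hnorm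
  · rw [hξ, hpH k (by rintro ⟨h, rfl⟩; exact hk (by simp [Subgroup.smul_def])), Real.sqrt_zero,
      Complex.ofReal_zero]
  · obtain ⟨d, hd, hsum⟩ := hp ⟨h, hH⟩ (by simpa using hS)
    refine le_of_sq_le_sq ?_ hε.le
    refine (hasSum_le (fun k => ?_) (hasSum_norm_sq (lreg h ξ - ξ)) hsum).trans hd
    rw [lp.coeFn_sub, Pi.sub_apply, lreg_apply, hξ, hξ, ← Complex.ofReal_sub, Complex.norm_real,
      Real.norm_eq_abs, sq_abs]
    exact sq_sqrt_sub_sqrt_le (hp0 _) (hp0 _)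

/-- The vector functional `a ↦ ⟨a ξ, ξ⟩` on the reduced C*-algebra. -/
def vectorFunctional (ξ : ℓ²(G, ℂ)) : WeakDual ℂ (redCstar G) :=
  (innerSL ℂ ξ).comp
    ((ContinuousLinearMap.apply ℂ ℓ²(G, ℂ) ξ).comp
      { toLinearMap := (redCstar G).subtype.toLinearMap, cont := continuous_subtype_val })

theorem vectorFunctional_apply (ξ : ℓ²(G, ℂ)) (a : redCstar G) :
    vectorFunctional ξ a = inner ℂ ξ ((a : ℓ²(G, ℂ) →L[ℂ] ℓ²(G, ℂ)) ξ) :=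
  rfl

theorem norm_vectorFunctional_le {ξ : ℓ²(G, ℂ)} (hξ : ‖ξ‖ = 1) (a : redCstar G) :
    ‖vectorFunctional ξ a‖ ≤ ‖a‖ := by
  rw [vectorFunctional_apply]
  refine (norm_inner_le_norm _ _).trans ?_
  rw [hξ, one_mul]
  exact (a : ℓ²(G, ℂ) →L[ℂ] ℓ²(G, ℂ)).unit_le_opNorm ξ hξ.le

theorem vectorFunctional_star_mul_self_nonneg (ξ : ℓ²(G, ℂ)) (a : redCstar G) :
    0 ≤ vectorFunctional ξ (star a * a) := by
  have hinner : vectorFunctional ξ (star a * a) =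
      inner ℂ ((a : ℓ²(G, ℂ) →L[ℂ] ℓ²(G, ℂ)) ξ) ((a : ℓ²(G, ℂ) →L[ℂ] ℓ²(G, ℂ)) ξ) := by
    rw [vectorFunctional_apply, MulMemClass.coe_mul, StarMemClass.coe_star, mul_apply_eq_comp]
    exact ContinuousLinearMap.adjoint_inner_right (a : ℓ²(G, ℂ) →L[ℂ] ℓ²(G, ℂ)) _ _
  rw [hinner, inner_self_eq_norm_sq_to_K]
  exact pow_nonneg (RCLike.ofReal_nonneg.2 (norm_nonneg _)) 2

theorem tau_star_mul_self_nonneg (a : redCstar G) : 0 ≤ tau G (star a * a) := by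
  rw [tau_apply]
  exact vectorFunctional_star_mul_self_nonneg deltaOne a

theorem vectorFunctional_uu_eq_zero {H : Subgroup G} {ξ : ℓ²(G, ℂ)} (hξ : ∀ k ∉ H, ξ k = 0)
    {g : G} (hg : g ∉ H) : vectorFunctional ξ (uu g) = 0 := by
  rw [vectorFunctional_apply, coe_uu, lp.inner_eq_tsum]
  refine (tsum_congr fun k => ?_).trans tsum_zero
  rw [lreg_apply]
  by_cases hk : k ∈ H
  · rw [hξ (g⁻¹ * k) (by rwa [H.mul_mem_cancel_right hk, inv_mem_iff]), inner_zero_right]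
  · rw [hξ k hk, inner_zero_left]

theorem dist_vectorFunctional_uu_one_le {ξ : ℓ²(G, ℂ)} (hξ : ‖ξ‖ = 1) (g : G) :
    dist (vectorFunctional ξ (uu g)) 1 ≤ ‖lreg g ξ - ξ‖ := by
  have hone : (1 : ℂ) = inner ℂ ξ ξ := by simp [inner_self_eq_norm_sq_to_K, hξ]
  rw [dist_eq_norm, vectorFunctional_apply, coe_uu, hone, ← inner_sub_right]
  simpa [hξ] using norm_inner_le_norm (𝕜 := ℂ) ξ (lreg g ξ - ξ)

open Classical in
theorem IsInvariantMean.exists_weakDual_uu_eq [TopologicalSpace G] [DiscreteTopology G]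
    {H : Subgroup G} {m : (H →ᵇ ℝ) → ℝ} (hm : IsInvariantMean H m) :
    ∃ φ : WeakDual ℂ (redCstar G), (∀ a, 0 ≤ φ (star a * a)) ∧
      ∀ g, φ (uu g) = if g ∈ H then 1 else 0 := by
  let K : Set (WeakDual ℂ (redCstar G)) :=
    {φ | ∀ a, ‖φ a‖ ≤ ‖a‖} ∩ {φ | ∀ a, 0 ≤ φ (star a * a)}
  have hK : IsCompact K := isCompact_setOf_norm_le.inter_right <| by
    rw [Set.ofPred_forall]
    exact isClosed_iInter fun a => isClosed_le continuous_const (WeakDual.eval_continuous _)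
  obtain ⟨φ, hφK, hφ⟩ := exists_mem_forall_eq_of_isCompact hK
    (e := fun g φ => φ (uu g)) (c := fun g => if g ∈ H then 1 else 0)
    (fun g => WeakDual.eval_continuous _) fun S ε hε => by
      obtain ⟨ξ, hξ1, hξH, hξ⟩ := exists_norm_eq_one_norm_lreg_sub_le hm S hε
      refine ⟨vectorFunctional ξ, ⟨norm_vectorFunctional_le hξ1,
        vectorFunctional_star_mul_self_nonneg ξ⟩, fun g hg => ?_⟩
      split_ifs with hgH
      · exact (dist_vectorFunctional_uu_one_le hξ1 g).trans (hξ g hg hgH)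
      · rw [vectorFunctional_uu_eq_zero hξH hgH, dist_self]
        exact hε.le
  exact ⟨φ, hφK.2, hφ⟩

end VectorState

/-! ### Positivity in simple C⋆-algebras -/

section SimpleCStarAlgebra

theorem map_mul_mul_eq_zero_of_forall_map_star_mul_mul_self {A : Type*} [Ring A] [StarRing A]
    [Algebra ℂ A] [StarModule ℂ A] {φ : A →ₗ[ℂ] ℂ} {q : A}
    (h : ∀ y, φ (star y * q * y) = 0) (x z : A) : φ (x * q * z) = 0 := by
  have hsum : φ (x * q * z) + φ (star z * q * star x) = 0 := by
    have hadd := h (star x + z)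
    have hx := h (star x)
    simp only [star_add, star_star, add_mul, mul_add, map_add] at hadd hx
    linear_combination hadd - hx - h z
  have hdiff : φ (x * q * z) - φ (star z * q * star x) = 0 := by
    have hadd := h (star x + Complex.I • z)
    have hx := h (star x)
    simp only [star_add, star_star, add_mul, mul_add, map_add, star_smul, smul_mul_assoc,
      mul_smul_comm, map_smul, smul_eq_mul, Complex.star_def, Complex.conj_I] at hadd hx
    linear_combination -Complex.I * (hadd - hx) + Complex.I * h z + (φ (x * q * z) -
      φ (star z * q * star x) - Complex.I * φ (star z * q * z)) * Complex.I_mul_I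
  linear_combination (hsum + hdiff) / 2

theorem eq_zero_of_forall_map_mul_mul_eq_zero {A : Type*} [Ring A] [Module ℂ A]
    [TopologicalSpace A] [ContinuousMul A]
    (hA : ∀ I : TwoSidedIdeal A, IsClosed (I : Set A) → I = ⊥ ∨ I = ⊤)
    {φ : WeakDual ℂ A} (hφ : φ 1 ≠ 0) {a : A} (ha : ∀ x z, φ (x * a * z) = 0) : a = 0 := by
  let I : TwoSidedIdeal A := TwoSidedIdeal.mk' {a | ∀ x z, φ (x * a * z) = 0}
    (fun x z => by rw [mul_zero, zero_mul, map_zero])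
    (fun ha hb x z => by rw [mul_add, add_mul, map_add, ha, hb, add_zero])
    (fun ha x z => by rw [mul_neg, neg_mul, map_neg, ha, neg_zero])
    (fun ha x z => by rw [← mul_assoc, ha])
    (fun ha x z => by rw [← mul_assoc, mul_assoc, ha])
  have mem_I (b : A) : b ∈ I ↔ ∀ x z, φ (x * b * z) = 0 := TwoSidedIdeal.mem_mk' ..
  have hclosed : IsClosed (I : Set A) := by
    rw [TwoSidedIdeal.coe_mk', Set.ofPred_forall]
    refine isClosed_iInter fun x => ?_
    rw [Set.ofPred_forall]
    exact isClosed_iInter fun z => isClosed_eq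
      ((map_continuous φ).comp (by fun_prop)) continuous_const
  have hone : (1 : A) ∉ I := fun h => hφ (by simpa using (mem_I 1).1 h 1 1)
  rcases hA I hclosed with hbot | htop
  · exact (TwoSidedIdeal.mem_bot A).1 (hbot ▸ (mem_I a).2 ha)
  · exact absurd (htop ▸ trivial) hone

/- Sandwiching `b` between its negative part `b⁻` gives `-(b⁻) ^ 3`, on which `φ` must then vanish
identically; simplicity turns this into `b⁻ = 0`. -/
theorem exists_eq_star_mul_self_of_forall_re_map_nonneg {A : Type*} [CStarAlgebra A]
    (hA : ∀ I : TwoSidedIdeal A, IsClosed (I : Set A) → I = ⊥ ∨ I = ⊤)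
    {φ : WeakDual ℂ A} (hφ1 : φ 1 ≠ 0) (hφ : ∀ a, 0 ≤ φ (star a * a)) {b : A}
    (hb : IsSelfAdjoint b) (h : ∀ x, 0 ≤ (φ (star x * b * x)).re) : ∃ c, b = star c * c := by
  let _ : PartialOrder A := CStarAlgebra.spectralOrder A
  have : StarOrderedRing A := CStarAlgebra.spectralOrderedRing A
  have hneg : 0 ≤ b⁻ := CFC.negPart_nonneg b
  have hself : star b⁻ = b⁻ := hneg.isSelfAdjoint
  have hcube : b⁻ * b * b⁻ = -(b⁻ * b⁻ * b⁻) := by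
    have := congrArg (b⁻ * · * b⁻) (CFC.posPart_sub_negPart b hb)
    simpa only [mul_sub, CFC.negPart_mul_posPart, zero_sub, neg_mul] using this.symm
  obtain ⟨s, hs⟩ := CStarAlgebra.nonneg_iff_eq_star_mul_self.1
    (conjugate_nonneg_of_nonneg hneg hneg)
  have hvanish (y : A) : φ (star y * (b⁻ * b⁻ * b⁻) * y) = 0 := by
    have hle : 0 ≤ φ (star y * (b⁻ * b⁻ * b⁻) * y) := by
      have := hφ (s * y)
      rwa [star_mul, mul_assoc, ← mul_assoc (star s), ← hs, ← mul_assoc] at this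
    have hge : 0 ≤ (φ (-(star y * (b⁻ * b⁻ * b⁻) * y))).re := by
      have := h (b⁻ * y)
      rwa [star_mul, hself, mul_assoc (star y), mul_assoc (star y), ← mul_assoc (b⁻ * b), hcube,
        neg_mul, mul_neg, ← mul_assoc (star y)] at this
    rw [map_neg, Complex.neg_re] at hge
    rw [Complex.le_def] at hle
    exact Complex.ext (le_antisymm (neg_nonneg.1 hge) hle.1) hle.2.symm
  have hzero : b⁻ * b⁻ * b⁻ = 0 := eq_zero_of_forall_map_mul_mul_eq_zero hA hφ1 <|
    map_mul_mul_eq_zero_of_forall_map_star_mul_mul_self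
      (φ := (WeakDual.toStrongDual φ).toLinearMap) hvanish
  have hsq : b⁻ * b⁻ = 0 := CStarRing.star_mul_self_eq_zero_iff _ |>.1 <| by
    rw [star_mul, hself, ← mul_assoc, hzero, zero_mul]
  have hneg0 : b⁻ = 0 := CStarRing.star_mul_self_eq_zero_iff _ |>.1 (by rw [hself, hsq])
  exact CStarAlgebra.nonneg_iff_eq_star_mul_self.1 ((CFC.negPart_eq_zero_iff b hb).1 hneg0)

end SimpleCStarAlgebra

section WeightedMass

variable {X : Type*} {ξ : X → ℂ} {N : ℝ} {u : X → ℝ}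

/-- The mass `∑ u(q) |ξ(q)|²` of a vector `ξ` with respect to a weight `u`. -/
def weightedMass (u : X → ℝ) (ξ : X → ℂ) : ℝ :=
  ∑' q, u q * ‖ξ q‖ ^ 2

theorem hasSum_weightedMass (hξ : HasSum (fun q => ‖ξ q‖ ^ 2) N) (hu : ∀ q, u q ∈ Set.Icc 0 1) :
    HasSum (fun q => u q * ‖ξ q‖ ^ 2) (weightedMass u ξ) :=
  (Summable.of_nonneg_of_le (fun q => mul_nonneg (hu q).1 (sq_nonneg _))
    (fun q => mul_le_of_le_one_left (sq_nonneg _) (hu q).2) hξ.summable).hasSum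

theorem mul_le_sum_mul_weightedMass {ι : Type*} {S : Finset ι} {w : ι → ℝ} {u : ι → X → ℝ}
    {c : ℝ} (hξ : HasSum (fun q => ‖ξ q‖ ^ 2) N) (hu : ∀ s q, u s q ∈ Set.Icc 0 1)
    (hc : ∀ q, c ≤ ∑ s ∈ S, w s * u s q) : c * N ≤ ∑ s ∈ S, w s * weightedMass (u s) ξ := by
  refine hasSum_le (fun q => ?_) (hξ.mul_left c)
    (hasSum_sum fun s _ => (hasSum_weightedMass hξ (hu s)).mul_left (w s))
  simp only [← mul_assoc]
  rw [← Finset.sum_mul]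
  exact mul_le_mul_of_nonneg_right (hc q) (sq_nonneg _)

theorem neg_le_re_star_mul (a b : ℂ) : -(‖a‖ ^ 2 + ‖b‖ ^ 2) / 2 ≤ (star a * b).re := by
  have hnorm : |(star a * b).re| ≤ ‖a‖ * ‖b‖ :=
    (Complex.abs_re_le_norm _).trans_eq (by rw [norm_mul, norm_star])
  linarith [neg_abs_le (star a * b).re, two_mul_le_add_sq ‖a‖ ‖b‖]

theorem re_star_mul_self (a : ℂ) : (star a * a).re = ‖a‖ ^ 2 := by
  rw [Complex.star_def, Complex.conj_mul', ← Complex.ofReal_pow, Complex.ofReal_re]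

theorem two_mul_weightedMass_sub_le {σ : Equiv.Perm X} {z : ℂ}
    (hξ : HasSum (fun q => ‖ξ q‖ ^ 2) N) (hu : ∀ q, u q ∈ Set.Icc 0 1)
    (hσ : ∀ q, u q ≠ 0 → σ q = q) (hz : HasSum (fun q => star (ξ q) * ξ (σ q)) z) :
    2 * weightedMass u ξ - N ≤ z.re := by
  have hmass := ((hasSum_weightedMass hξ hu).mul_left 2).sub hξ
  have havg := (hmass.add (σ.hasSum_iff.2 hmass)).div_const 2
  rw [add_self_div_two] at havg
  refine hasSum_le (fun q => ?_) havg (Complex.hasSum_re hz)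
  simp only [Function.comp_apply]
  by_cases hq : σ q = q
  · rw [hq, re_star_mul_self]
    nlinarith [(hu q).2, sq_nonneg ‖ξ q‖]
  · have hσq : u (σ q) = 0 := not_imp_comm.1 (hσ (σ q)) fun h => hq (σ.injective h)
    rw [not_imp_comm.1 (hσ q) hq, hσq]
    linarith [neg_le_re_star_mul (ξ q) (ξ (σ q))]

end WeightedMass

/-! ### Topological freeness -/

section TopologicallyFree

variable (G) in
/-- The action of `G` on `X` is topologically free: the fixed points of a nontrivial element have
empty interior. -/
def IsTopologicallyFree (X : Type*) [TopologicalSpace X] [MulAction G X] : Prop :=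
  ∀ g : G, g ≠ 1 → interior (MulAction.fixedBy X g) = ∅

variable {X : Type*} [MulAction G X] {x₀ : X} {φ : WeakDual ℂ (redCstar G)}

open Classical in
theorem hasSum_ite_mul_ite_map_uu (hφ : ∀ g, φ (uu g) = if g • x₀ = x₀ then 1 else 0)
    (j g k : G) :
    HasSum (fun q => (if j • x₀ = q then (1 : ℂ) else 0) * if k • x₀ = g⁻¹ • q then 1 else 0)
      (φ (uu (j⁻¹ * g * k))) := by
  have hiff : (j⁻¹ * g * k) • x₀ = x₀ ↔ k • x₀ = g⁻¹ • j • x₀ := by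
    rw [mul_smul, mul_smul, inv_smul_eq_iff, eq_inv_smul_iff]
  convert hasSum_single (j • x₀) fun q hq => ?_ using 1
  · rw [if_pos rfl, one_mul, hφ, if_congr hiff rfl rfl]
  · rw [if_neg hq.symm, zero_mul]

/- The vector `ξ` is the image of `a` under the GNS map of `φ`, whose representation is the
permutation representation on the orbit of `x₀`. -/
open Classical in
theorem exists_hasSum_map_star_mul_uu_mul (hφ : ∀ g, φ (uu g) = if g • x₀ = x₀ then 1 else 0)
    {a : redCstar G} (ha : a ∈ Submodule.span ℂ (Set.range (uu (G := G)))) :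
    ∃ ξ : X → ℂ, ∀ g : G,
      HasSum (fun q => star (ξ q) * ξ (g⁻¹ • q)) (φ (star a * uu g * a)) := by
  obtain ⟨c, rfl⟩ := Finsupp.mem_span_range_iff_exists_finsupp.1 ha
  refine ⟨fun q => ∑ j ∈ c.support, c j * if j • x₀ = q then 1 else 0, fun g => ?_⟩
  have hexpand : star (c.sum fun j r => r • uu j) * uu g * (c.sum fun j r => r • uu j) =
      ∑ j ∈ c.support, ∑ k ∈ c.support, (star (c j) * c k) • uu (j⁻¹ * g * k) := by
    rw [Finsupp.sum, star_sum, Finset.sum_mul, Finset.sum_mul_sum]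
    refine Finset.sum_congr rfl fun j _ => Finset.sum_congr rfl fun k _ => ?_
    rw [star_smul, star_uu, uu_mul, uu_mul, smul_mul_assoc, smul_mul_assoc, mul_smul_comm,
      smul_smul]
  simp only [hexpand, star_sum, Finset.sum_mul_sum, map_sum, map_smul, smul_eq_mul]
  refine hasSum_sum fun j _ => hasSum_sum fun k _ => ?_
  refine ((hasSum_ite_mul_ite_map_uu hφ j g k).mul_left (star (c j) * c k)).congr_fun fun q => ?_
  split_ifs <;> simp

/-- The average of the conjugates `s⁻¹ g s` with weights `w(s)`, as an element of the reduced
C*-algebra. -/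
def conjugateAverage (S : Finset G) (w : G → ℝ) (g : G) : redCstar G :=
  ∑ s ∈ S, (w s : ℂ) • uu (s⁻¹ * g * s)

theorem star_conjugateAverage (S : Finset G) (w : G → ℝ) (g : G) :
    star (conjugateAverage S w g) = conjugateAverage S w g⁻¹ := by
  simp only [conjugateAverage, star_sum, star_smul, star_uu, Complex.star_def, Complex.conj_ofReal,
    mul_inv_rev, inv_inv, mul_assoc]

theorem tau_conjugateAverage (S : Finset G) (w : G → ℝ) {g : G} (hg : g ≠ 1) :
    tau G (conjugateAverage S w g) = 0 := by
  classical
  rw [conjugateAverage, map_sum]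
  refine Finset.sum_eq_zero fun s _ => ?_
  rw [map_smul, tau_uu, if_neg, smul_zero]
  rwa [mul_assoc, inv_mul_eq_one, eq_comm, mul_eq_right]

open Classical in
theorem mul_re_map_star_mul_self_le (hφ : ∀ g, φ (uu g) = if g • x₀ = x₀ then 1 else 0)
    {S : Finset G} {w : G → ℝ} (hw : ∀ s ∈ S, 0 ≤ w s) (hw1 : ∑ s ∈ S, w s = 1) {u : X → ℝ}
    (hu : ∀ q, u q ∈ Set.Icc 0 1) {c : ℝ} (hc : ∀ q, c ≤ ∑ s ∈ S, w s * u (s • q)) {g : G}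
    (hg : ∀ q, u q ≠ 0 → g • q = q) (a : redCstar G) :
    (2 * c - 1) * (φ (star a * a)).re ≤ (φ (star a * conjugateAverage S w g * a)).re := by
  refine dense_span_range_uu.induction (P := fun a => (2 * c - 1) * (φ (star a * a)).re ≤
    (φ (star a * conjugateAverage S w g * a)).re) (fun a ha => ?_) ?_ a
  · obtain ⟨ξ, hξ⟩ := exists_hasSum_map_star_mul_uu_mul hφ ha
    have hN : HasSum (fun q => ‖ξ q‖ ^ 2) (φ (star a * a)).re := by
      simpa only [uu_one, mul_one, inv_one, one_smul, re_star_mul_self] using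
        Complex.hasSum_re (hξ 1)
    have hterm (s : G) : 2 * weightedMass (fun q => u (s • q)) ξ - (φ (star a * a)).re ≤
        (φ (star a * uu (s⁻¹ * g * s) * a)).re :=
      two_mul_weightedMass_sub_le (σ := MulAction.toPerm (s⁻¹ * g * s)⁻¹) hN (fun q => hu _)
        (fun q hq => inv_smul_eq_iff.2 (by rw [mul_smul, mul_smul, hg _ hq, inv_smul_smul]))
        (hξ _)
    calc (2 * c - 1) * (φ (star a * a)).re
        = 2 * (c * (φ (star a * a)).re) - (∑ s ∈ S, w s) * (φ (star a * a)).re := by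
          rw [hw1]; ring
      _ ≤ 2 * ∑ s ∈ S, w s * weightedMass (fun q => u (s • q)) ξ -
            (∑ s ∈ S, w s) * (φ (star a * a)).re := by
          gcongr
          exact mul_le_sum_mul_weightedMass hN (fun s q => hu _) hc
      _ = ∑ s ∈ S, w s * (2 * weightedMass (fun q => u (s • q)) ξ - (φ (star a * a)).re) := by
          rw [Finset.mul_sum, Finset.sum_mul, ← Finset.sum_sub_distrib]
          exact Finset.sum_congr rfl fun s _ => by ring
      _ ≤ ∑ s ∈ S, w s * (φ (star a * uu (s⁻¹ * g * s) * a)).re :=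
          Finset.sum_le_sum fun s hs => mul_le_mul_of_nonneg_left (hterm s) (hw s hs)
      _ = (φ (star a * conjugateAverage S w g * a)).re := by
          simp only [conjugateAverage, Finset.mul_sum, Finset.sum_mul, mul_smul_comm,
            smul_mul_assoc, map_sum, map_smul, smul_eq_mul, Complex.re_sum,
            Complex.re_ofReal_mul]
  · have hφc := map_continuous φ
    exact isClosed_le (by fun_prop) (by fun_prop)

/- If `g ≠ 1` fixes an open set pointwise, weights concentrated there make
`conjugateAverage S w g + conjugateAverage S w g⁻¹ - 1` positive, although its trace is `-1`. -/
open Classical in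
theorem IsBoundaryAction.isTopologicallyFree [TopologicalSpace X] [CompactSpace X] [T2Space X]
    (hX : IsBoundaryAction G X) (hG : IsCstarSimple G) (hφ0 : ∀ a, 0 ≤ φ (star a * a))
    (hφ : ∀ g, φ (uu g) = if g • x₀ = x₀ then 1 else 0) : IsTopologicallyFree G X := by
  refine fun g hg => Set.not_nonempty_iff_eq_empty.1 fun ⟨x, hx⟩ => ?_
  obtain ⟨f, hf0, hf1, hf⟩ := exists_continuous_zero_one_of_isClosed
    isOpen_interior.isClosed_compl (isClosed_singleton (x := x))
    (Set.disjoint_singleton_right.2 (Set.notMem_compl_iff.2 hx))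
  obtain ⟨S, w, hw, hw1, hc⟩ := hX f x (3 / 4) (by rw [hf1 rfl]; norm_num)
  have hfix (q : X) (hq : f q ≠ 0) : g • q = q := by
    have hqg : q ∈ interior (MulAction.fixedBy X g) := Set.notMem_compl_iff.1 fun h => hq (hf0 h)
    exact MulAction.mem_fixedBy.1 (interior_subset hqg)
  have hfix' (q : X) (hq : f q ≠ 0) : g⁻¹ • q = q := inv_smul_eq_iff.2 (hfix q hq).symm
  let b : redCstar G := conjugateAverage S w g + conjugateAverage S w g⁻¹ - 1
  have hb : IsSelfAdjoint b := by
    rw [IsSelfAdjoint, star_sub, star_add, star_conjugateAverage, star_conjugateAverage, inv_inv,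
      star_one, add_comm]
  have hτb : tau G b = -1 := by
    rw [map_sub, map_add, tau_conjugateAverage S w hg, tau_conjugateAverage S w (inv_ne_one.2 hg),
      tau_one, add_zero, zero_sub]
  have hφb (a : redCstar G) : 0 ≤ (φ (star a * b * a)).re := by
    have hexpand : star a * b * a = star a * conjugateAverage S w g * a +
        star a * conjugateAverage S w g⁻¹ * a - star a * a := by
      rw [mul_sub, sub_mul, mul_add, add_mul, mul_one]
    rw [hexpand, map_sub, map_add, Complex.sub_re, Complex.add_re]
    linarith [mul_re_map_star_mul_self_le hφ hw hw1 hf (fun q => (hc q).le) hfix a,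
      mul_re_map_star_mul_self_le hφ hw hw1 hf (fun q => (hc q).le) hfix' a]
  have hφ1 : φ 1 ≠ 0 := by
    rw [← uu_one, hφ, if_pos (one_smul G x₀)]
    exact one_ne_zero
  have := isClosed_redCstar (G := G)
  obtain ⟨c, hc⟩ := exists_eq_star_mul_self_of_forall_re_map_nonneg hG hφ1 hφ0 hb hφb
  have hτ : 0 ≤ tau G b := hc ▸ tau_star_mul_self_nonneg c
  rw [hτb] at hτ
  exact absurd (Complex.le_def.1 hτ).1 (by norm_num)

end TopologicallyFree

/-! ### Averaging over a topologically free boundary -/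

section Averaging

variable {ε : ℝ}

theorem mul_le_of_mul_eq_zero {p q u v : ℝ} (hε : 0 < ε) (hu : u ≤ 1) (hv : v ≤ 1)
    (huv : u * v = 0) :
    p * q ≤ (ε * (p ^ 2 + q ^ 2) + ((p ^ 2 - u * p ^ 2) + (q ^ 2 - v * q ^ 2)) / ε) / 2 := by
  have hp : 0 ≤ ε⁻¹ * (p ^ 2 - u * p ^ 2) :=
    mul_nonneg (inv_nonneg.2 hε.le) (by nlinarith [sq_nonneg p])
  have hq : 0 ≤ ε⁻¹ * (q ^ 2 - v * q ^ 2) :=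
    mul_nonneg (inv_nonneg.2 hε.le) (by nlinarith [sq_nonneg q])
  rw [div_eq_inv_mul _ ε]
  rcases mul_eq_zero.1 huv with rfl | rfl
  · nlinarith [two_mul_le_add_mul_sq (a := q) (b := p) hε, mul_nonneg hε.le (sq_nonneg p)]
  · nlinarith [two_mul_le_add_mul_sq (a := p) (b := q) hε, mul_nonneg hε.le (sq_nonneg q)]

theorem norm_inner_lreg_le {σ : G} {u : G → ℝ} (hε : 0 < ε) (hu : ∀ k, u k ∈ Set.Icc 0 1)
    (huσ : ∀ k, u k * u (σ⁻¹ * k) = 0) (ξ η : ℓ²(G, ℂ)) :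
    ‖inner ℂ η (lreg σ ξ)‖ ≤ (ε * (‖η‖ ^ 2 + ‖ξ‖ ^ 2) +
      ((‖η‖ ^ 2 - weightedMass u η) + (‖ξ‖ ^ 2 - weightedMass u ξ)) / ε) / 2 := by
  have hη := hasSum_norm_sq η
  have hξ := hasSum_norm_sq ξ
  have hξσ : HasSum (fun k => ‖ξ (σ⁻¹ * k)‖ ^ 2) (‖ξ‖ ^ 2) := (Equiv.mulLeft σ⁻¹).hasSum_iff.2 hξ
  have hmassσ : HasSum (fun k => u (σ⁻¹ * k) * ‖ξ (σ⁻¹ * k)‖ ^ 2) (weightedMass u ξ) :=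
    (Equiv.mulLeft σ⁻¹).hasSum_iff.2 (hasSum_weightedMass hξ hu)
  have hbound := ((((hη.add hξσ).mul_left ε).add
    (((hη.sub (hasSum_weightedMass hη hu)).add (hξσ.sub hmassσ)).div_const ε)).div_const 2)
  refine HasSum.norm_le_of_bounded (lp.hasSum_inner η (lreg σ ξ)) hbound fun k => ?_
  rw [lreg_apply]
  exact (norm_inner_le_norm _ _).trans (mul_le_of_mul_eq_zero hε (hu _).2 (hu _).2 (huσ k))

theorem norm_sum_smul_uu_le {ι : Type*} {S : Finset ι} {w : ι → ℝ} {c : ι → ℂ} {σ : ι → G}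
    {u : ι → G → ℝ} (hε : 0 < ε) (hw : ∑ i ∈ S, w i = 1) (hc : ∀ i ∈ S, ‖c i‖ ≤ w i)
    (hu : ∀ i k, u i k ∈ Set.Icc 0 1) (huσ : ∀ i k, u i k * u i ((σ i)⁻¹ * k) = 0)
    (hwu : ∀ k, 1 - ε ^ 2 ≤ ∑ i ∈ S, w i * u i k) : ‖∑ i ∈ S, c i • uu (σ i)‖ ≤ 2 * ε := by
  have hmass (ξ : ℓ²(G, ℂ)) (hξ : ‖ξ‖ = 1) : 1 - ε ^ 2 ≤ ∑ i ∈ S, w i * weightedMass (u i) ξ := by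
    simpa only [hξ, one_pow, mul_one] using mul_le_sum_mul_weightedMass (hasSum_norm_sq ξ) hu hwu
  change ‖((∑ i ∈ S, c i • uu (σ i) : redCstar G) : ℓ²(G, ℂ) →L[ℂ] ℓ²(G, ℂ))‖ ≤ 2 * ε
  refine ContinuousLinearMap.opNorm_le_of_re_inner_le (by positivity) fun ξ η hξ hη => ?_
  have hterm (i : ι) (hi : i ∈ S) : ‖inner ℂ η ((c i • lreg (σ i)) ξ)‖ ≤ w i *
      ((ε * (1 + 1) + ((1 - weightedMass (u i) η) + (1 - weightedMass (u i) ξ)) / ε) / 2) := by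
    have hinner := norm_inner_lreg_le hε (hu i) (huσ i) ξ η
    rw [hξ, hη, one_pow] at hinner
    rw [smul_apply, inner_smul_right, norm_mul]
    exact mul_le_mul (hc i hi) hinner (norm_nonneg _) ((norm_nonneg _).trans (hc i hi))
  calc RCLike.re (inner ℂ (((∑ i ∈ S, c i • uu (σ i) : redCstar G) :
        ℓ²(G, ℂ) →L[ℂ] ℓ²(G, ℂ)) ξ) η)
      ≤ ‖∑ i ∈ S, inner ℂ η ((c i • lreg (σ i)) ξ)‖ := by
        rw [← inner_sum, ← sum_apply, norm_inner_symm]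
        push_cast
        simp only [coe_uu]
        exact RCLike.re_le_norm _
    _ ≤ ∑ i ∈ S, w i *
          ((ε * (1 + 1) + ((1 - weightedMass (u i) η) + (1 - weightedMass (u i) ξ)) / ε) / 2) :=
        norm_sum_le_of_le S hterm
    _ = ((∑ i ∈ S, w i) * (ε * 2) + (2 * (∑ i ∈ S, w i) - ∑ i ∈ S, w i * weightedMass (u i) η -
          ∑ i ∈ S, w i * weightedMass (u i) ξ) / ε) / 2 := by
        simp only [Finset.sum_mul, Finset.mul_sum, ← Finset.sum_sub_distrib, Finset.sum_div,
          ← Finset.sum_add_distrib]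
        exact Finset.sum_congr rfl fun i _ => by ring
    _ ≤ (ε * 2 + (2 * ε ^ 2) / ε) / 2 := by
        rw [hw, one_mul, mul_one]
        gcongr
        linarith [hmass ξ hξ, hmass η hη]
    _ = 2 * ε := by
        field_simp
        ring

theorem sum_mul_norm_map_le {E ι : Type*} [SeminormedAddCommGroup E] [NormedSpace ℂ E]
    {S : Finset ι} {w : ι → ℝ} {a : ι → E} {M : ℝ} (hw : ∀ i ∈ S, 0 ≤ w i)
    (h : ∀ c : ι → ℂ, (∀ i ∈ S, ‖c i‖ ≤ w i) → ‖∑ i ∈ S, c i • a i‖ ≤ M) (φ : E →L[ℂ] ℂ) :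
    ∑ i ∈ S, w i * ‖φ (a i)‖ ≤ ‖φ‖ * M := by
  choose θ hθ hφθ using fun i => Complex.exists_norm_eq_mul_self (φ (a i))
  have hsum : φ (∑ i ∈ S, (w i * θ i : ℂ) • a i) = (∑ i ∈ S, w i * ‖φ (a i)‖ : ℝ) := by
    simp only [map_sum, map_smul, smul_eq_mul, Complex.ofReal_sum, Complex.ofReal_mul, hφθ,
      mul_assoc]
  calc ∑ i ∈ S, w i * ‖φ (a i)‖
      ≤ ‖φ (∑ i ∈ S, (w i * θ i : ℂ) • a i)‖ := by
        rw [hsum, Complex.norm_real]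
        exact le_abs_self _
    _ ≤ ‖φ‖ * M := φ.le_opNorm_of_le <| h _ fun i hi => by
        rw [norm_mul, hθ, mul_one, Complex.norm_real, Real.norm_of_nonneg (hw i hi)]

variable {X : Type*} [TopologicalSpace X] [CompactSpace X] [T2Space X] [MulAction G X]
  [ContinuousConstSMul G X]

theorem IsTopologicallyFree.exists_forall_smul_ne [Nonempty X] (hX : IsTopologicallyFree G X)
    {F : Finset G} (hF : 1 ∉ F) : ∃ z : X, ∀ g ∈ F, g • z ≠ z := by
  have hdense : Dense (⋂ g ∈ F, (MulAction.fixedBy X g)ᶜ) := by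
    refine dense_biInter_of_isOpen (S := (F : Set G)) (fun g _ => ?_) F.countable_toSet
      fun g hg => interior_eq_empty_iff_dense_compl.1 (hX g (ne_of_mem_of_not_mem hg hF))
    exact (isClosed_eq (continuous_const_smul g) continuous_id).isOpen_compl
  exact hdense.nonempty.imp fun z hz => Set.mem_iInter₂.1 hz

theorem exists_continuousMap_mul_smul_eq_zero {F : Finset G} {z : X}
    (hz : ∀ g ∈ F, g • z ≠ z) :
    ∃ f : C(X, ℝ), f z = 1 ∧ (∀ x, f x ∈ Set.Icc 0 1) ∧ ∀ g ∈ F, ∀ x, f x * f (g⁻¹ • x) = 0 := by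
  have hsep : ∀ᶠ U in (nhds z).smallSets, ∀ g ∈ F, Disjoint U ((g • ·) '' U) := by
    refine (Filter.eventually_all_finset F).2 fun g hg => ?_
    obtain ⟨A, hA, B, hB, hAB⟩ := Filter.disjoint_iff.1 (disjoint_nhds_nhds.2 (hz g hg).symm)
    have hB' := (continuous_const_smul g).continuousAt.preimage_mem_nhds hB
    filter_upwards [Filter.eventually_smallSets_subset.2 hA,
      Filter.eventually_smallSets_subset.2 hB'] with U hUA hUB
    exact hAB.mono hUA (Set.image_subset_iff.2 hUB)
  obtain ⟨V, hV, hVF⟩ := Filter.eventually_smallSets.1 hsep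
  obtain ⟨f, hf0, hf1, hf⟩ := exists_continuous_zero_one_of_isClosed isOpen_interior.isClosed_compl
    (isClosed_singleton (x := z))
    (Set.disjoint_singleton_right.2 (Set.notMem_compl_iff.2 (mem_interior_iff_mem_nhds.2 hV)))
  have hfV (x : X) (hx : f x ≠ 0) : x ∈ V := interior_subset (not_not.1 fun h => hx (hf0 h))
  refine ⟨f, hf1 rfl, hf, fun g hg x => ?_⟩
  by_contra hne
  obtain ⟨hx, hgx⟩ := mul_ne_zero_iff.1 hne
  exact Set.disjoint_left.1 (hVF V subset_rfl g hg) (hfV x hx)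
    ⟨g⁻¹ • x, hfV _ hgx, smul_inv_smul g x⟩

theorem IsBoundaryAction.exists_sum_norm_map_uu_le [Nonempty X] (hX : IsBoundaryAction G X)
    (hfree : IsTopologicallyFree G X) {F : Finset G} (hF : 1 ∉ F) (φ : redCstar G →L[ℂ] ℂ)
    (hε : 0 < ε) : ∃ s : G, ∑ g ∈ F, ‖φ (uu (s⁻¹ * g * s))‖ ≤ ε := by
  obtain ⟨δ, hδ, hδε⟩ := exists_pos_mul_lt hε (F.card * (‖φ‖ * 2))
  obtain ⟨z, hz⟩ := hfree.exists_forall_smul_ne hF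
  obtain ⟨f, hfz, hf, hfF⟩ := exists_continuousMap_mul_smul_eq_zero hz
  obtain ⟨S, w, hw, hw1, hlt⟩ := hX f z (1 - δ ^ 2) (by rw [hfz]; linarith [pow_pos hδ 2])
  obtain ⟨x₀⟩ := ‹Nonempty X›
  have havg (g : G) (hg : g ∈ F) :
      ∑ s ∈ S, w s * ‖φ (uu (s⁻¹ * g * s))‖ ≤ ‖φ‖ * (2 * δ) := by
    refine sum_mul_norm_map_le hw (fun c hc => ?_) φ
    refine norm_sum_smul_uu_le (u := fun s k => f (s • k • x₀)) hδ hw1 hc (fun _ _ => hf _)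
      (fun s k => ?_) fun k => (hlt _).le
    convert hfF g hg (s • k • x₀) using 3
    simp only [← mul_smul]
    group
  have hpos : 0 < ∑ s ∈ S, w s := hw1 ▸ one_pos
  obtain ⟨s, -, hs⟩ := (concaveOn_id convex_univ).exists_le_of_centerMass hw hpos
    (p := fun s => ∑ g ∈ F, ‖φ (uu (s⁻¹ * g * s))‖) fun _ _ => Set.mem_univ _
  refine ⟨s, hs.trans ?_⟩
  calc S.centerMass w (fun s => ∑ g ∈ F, ‖φ (uu (s⁻¹ * g * s))‖)
      = ∑ g ∈ F, ∑ s ∈ S, w s * ‖φ (uu (s⁻¹ * g * s))‖ := by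
        simp only [Finset.centerMass_eq_of_sum_1 _ _ hw1, smul_eq_mul, Finset.mul_sum]
        exact Finset.sum_comm
    _ ≤ F.card • (‖φ‖ * (2 * δ)) := Finset.sum_le_card_nsmul _ _ _ havg
    _ = F.card * (‖φ‖ * 2) * δ := by
        rw [nsmul_eq_mul]
        ring
    _ ≤ ε := hδε.le

theorem IsBoundaryAction.map_one_smul_tau_mem [Nonempty X] (hX : IsBoundaryAction G X)
    (hfree : IsTopologicallyFree G X) {B : Set (WeakDual ℂ (redCstar G))} (hB : IsCompact B)
    (hinv : ∀ (g : G), ∀ φ ∈ B, g • φ ∈ B) {φ : WeakDual ℂ (redCstar G)} (hφ : φ ∈ B) :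
    φ 1 • tau G ∈ B := by
  classical
  obtain ⟨ψ, hψB, hψ⟩ := exists_mem_forall_eq_of_isCompact hB
    (fun g : G => WeakDual.eval_continuous (uu g)) (c := fun g => φ 1 * tau G (uu g))
    fun F ε hε => by
      obtain ⟨s, hs⟩ := hX.exists_sum_norm_map_uu_le hfree (Finset.notMem_erase 1 F)
        (WeakDual.toStrongDual φ) hε
      refine ⟨s • φ, hinv s φ hφ, fun g hg => ?_⟩
      rw [smul_dual_apply, ← uu_mul, ← uu_mul]
      by_cases hg1 : g = 1
      · rw [hg1, mul_one, inv_mul_cancel, uu_one, tau_one, mul_one, dist_self]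
        exact hε.le
      · rw [tau_uu, if_neg hg1, mul_zero, dist_zero_right]
        exact (Finset.single_le_sum (f := fun g => ‖φ (uu (s⁻¹ * g * s))‖)
          (fun _ _ => norm_nonneg _) (Finset.mem_erase.2 ⟨hg1, hg⟩)).trans hs
  exact dual_ext (ψ := φ 1 • tau G) hψ ▸ hψB

end Averaging

section Simple

theorem IsCstarSimple.exists_isTopologicallyFree [TopologicalSpace G] [DiscreteTopology G]
    (hG : IsCstarSimple G) :
    ∃ X : SubMulAction G ((G →ᵇ ℝ) → ℝ), CompactSpace X ∧ Nonempty X ∧ IsBoundaryAction G X ∧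
      IsTopologicallyFree G X := by
  obtain ⟨X, hcompact, ⟨x₀⟩, hX, hmean⟩ := exists_isBoundaryAction_isInvariantMean_stabilizer G
  obtain ⟨m, hm⟩ := hmean x₀
  obtain ⟨φ, hφ0, hφ⟩ := hm.exists_weakDual_uu_eq
  exact ⟨X, hcompact, ⟨x₀⟩, hX, hX.isTopologicallyFree hG hφ0 hφ⟩

theorem IsCstarSimple.exists_eq_singleton_smul_tau (hG : IsCstarSimple G)
    {B : Set (WeakDual ℂ (redCstar G))} (hB : IsDualBoundary G B) :
    ∃ c : ℂ, B = {c • tau G} := by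
  let _ : TopologicalSpace G := ⊥
  have : DiscreteTopology G := ⟨rfl⟩
  obtain ⟨X, _, _, hX, hfree⟩ := hG.exists_isTopologicallyFree
  obtain ⟨⟨φ, hφ⟩, hcompact, hinv, -⟩ := id hB
  exact ⟨φ 1, hB.eq_singleton (hX.map_one_smul_tau_mem hfree hcompact hinv hφ) fun g => by
    rw [smul_comm, smul_tau]⟩

end Simple

/-- A discrete group is C*-simple if and only if every `G`-boundary contained in the dual of
`C*_λ(G)` is a singleton consisting of a scalar multiple of the canonical trace. -/
theorem cstarSimple_iff_boundaries_in_dual_trivial (G : Type u) [Group G] :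
    IsCstarSimple G ↔
      ∀ B : Set (WeakDual ℂ (redCstar G)), IsDualBoundary G B →
        ∃ c : ℂ, B = {c • tau G} :=
  ⟨fun hG _ hB => hG.exists_eq_singleton_smul_tau hB, isCstarSimple_of_forall_isDualBoundary⟩
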